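/- arXiv:2109.05239 — 2 statements merged into one kernel-verified Lean document; each statement's English description precedes it below -/
import Mathlib

section
/- Let X be a rearrangement invariant Banach function space on (0,1) or (0,∞) with the Fatou property. Then for every f ∈ X, dist(f, X_a) = dist(f*, X_a), where f* is the non-increasing rearrangement of f and X_a is the ideal of order continuous elements. -/
open Filter Topology MeasureTheory Set

/-- A **Banach ideal space** on a measure space `(α, μ)`: a collection of (real-valued)
measurable functions with a complete lattice-compatible norm satisfying the ideal property. -/
structure BanachIdealSpace (α : Type*) [MeasurableSpace α] (μ : Measure α) where
  Mem : (α → ℝ) → Prop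
  N : (α → ℝ) → ℝ
  mem_zero : Mem 0
  mem_add : ∀ f g, Mem f → Mem g → Mem (f + g)
  mem_smul : ∀ (c : ℝ) f, Mem f → Mem (c • f)
  measurable : ∀ f, Mem f → AEMeasurable f μ
  N_nonneg : ∀ f, 0 ≤ N f
  N_zero : N 0 = 0
  N_eq_zero : ∀ f, Mem f → N f = 0 → (∀ᵐ x ∂μ, f x = 0)
  N_add : ∀ f g, Mem f → Mem g → N (f + g) ≤ N f + N g
  N_smul : ∀ (c : ℝ) f, N (c • f) = |c| * N f
  ideal : ∀ f g, AEMeasurable f μ → (∀ᵐ x ∂μ, |f x| ≤ |g x|) → Mem g →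
    Mem f ∧ N f ≤ N g
  complete : ∀ u : ℕ → (α → ℝ), (∀ n, Mem (u n)) →
    (∀ ε : ℝ, 0 < ε → ∃ n₀ : ℕ, ∀ m n, n₀ ≤ m → n₀ ≤ n → N (u m - u n) < ε) →
    ∃ f, Mem f ∧ Tendsto (fun n => N (u n - f)) atTop (𝓝 0)

namespace BanachIdealSpace

variable {α : Type*} [MeasurableSpace α] {μ : Measure α}

/-- Distance (w.r.t. a norm functional `N`) from `f` to a set `S` of functions. -/
noncomputable def distIn (N : (α → ℝ) → ℝ) (f : α → ℝ) (S : Set (α → ℝ)) : ℝ :=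
  sInf ((fun g => N (f - g)) '' S)

/-- The set of **order continuous elements** of a (generalized) function space given by a
membership predicate `Mem` and a norm `N`: those `f` such that every sequence `uₙ` with
`0 ≤ uₙ ≤ |f|` a.e., a.e. non-increasing and converging to `0` a.e., satisfies `N (uₙ) → 0`. -/
def ocSet (μ : Measure α) (Mem : (α → ℝ) → Prop) (N : (α → ℝ) → ℝ) : Set (α → ℝ) :=
  {f | Mem f ∧ ∀ u : ℕ → (α → ℝ), (∀ n, Mem (u n)) →
    (∀ n, ∀ᵐ x ∂μ, 0 ≤ u n x ∧ u n x ≤ |f x|) →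
    (∀ n, ∀ᵐ x ∂μ, u (n + 1) x ≤ u n x) →
    (∀ᵐ x ∂μ, Tendsto (fun n => u n x) atTop (𝓝 0)) →
    Tendsto (fun n => N (u n)) atTop (𝓝 0)}

/-- The ideal `X_a` of order continuous elements of a Banach ideal space `X`. -/
def oc (X : BanachIdealSpace α μ) : Set (α → ℝ) := ocSet μ X.Mem X.N

/-- An **order ideal** of a Banach ideal space: a closed solid linear subspace. -/
structure IsOrderIdeal (X : BanachIdealSpace α μ) (J : Set (α → ℝ)) : Prop where
  subset : ∀ f ∈ J, X.Mem f
  zero : (0 : α → ℝ) ∈ J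
  add : ∀ f g, f ∈ J → g ∈ J → f + g ∈ J
  smul : ∀ (c : ℝ) f, f ∈ J → c • f ∈ J
  solid : ∀ f g, f ∈ J → X.Mem g → (∀ᵐ x ∂μ, |g x| ≤ |f x|) → g ∈ J
  closed : ∀ (u : ℕ → (α → ℝ)) f, (∀ n, u n ∈ J) → X.Mem f →
    Tendsto (fun n => X.N (f - u n)) atTop (𝓝 0) → f ∈ J

/-- The **Fatou property** of a Banach ideal space. -/
def Fatou (X : BanachIdealSpace α μ) : Prop :=
  ∀ (u : ℕ → (α → ℝ)) (f : α → ℝ), (∀ n, X.Mem (u n)) → AEMeasurable f μ →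
    (∀ᵐ x ∂μ, 0 ≤ u 0 x) → (∀ᵐ x ∂μ, Monotone fun n => u n x) →
    (∀ᵐ x ∂μ, Tendsto (fun n => u n x) atTop (𝓝 (f x))) →
    BddAbove (Set.range fun n => X.N (u n)) →
    X.Mem f ∧ Tendsto (fun n => X.N (u n)) atTop (𝓝 (X.N f))

/-- The **semi-Fatou property**: if `0 ≤ uₙ ↑ f ∈ X` then `‖uₙ‖ ↑ ‖f‖`. -/
def SemiFatou (X : BanachIdealSpace α μ) : Prop :=
  ∀ (u : ℕ → (α → ℝ)) (f : α → ℝ), (∀ n, X.Mem (u n)) → X.Mem f →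
    (∀ᵐ x ∂μ, 0 ≤ u 0 x) → (∀ᵐ x ∂μ, Monotone fun n => u n x) →
    (∀ᵐ x ∂μ, Tendsto (fun n => u n x) atTop (𝓝 (f x))) →
    Tendsto (fun n => X.N (u n)) atTop (𝓝 (X.N f))

/-- A Banach ideal space is **rearrangement invariant (symmetric)**: equimeasurable
functions belong to the space simultaneously and have equal norms. -/
def Symmetric (X : BanachIdealSpace α μ) : Prop :=
  ∀ f g, AEMeasurable f μ →
    (∀ lam : ℝ, 0 < lam → μ {x | lam < |f x|} = μ {x | lam < |g x|}) →
    X.Mem g → X.Mem f ∧ X.N f = X.N g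

/-- The **non-increasing rearrangement** of a function `f` (w.r.t. the measure `μ`). -/
noncomputable def rear (μ : Measure α) (f : α → ℝ) (t : ℝ) : ℝ :=
  sInf {lam : ℝ | 0 < lam ∧ μ {x | lam < |f x|} ≤ ENNReal.ofReal t}

/-- A (generalized) function space given by `(Mem, N)` contains a **lattice isometric copy
of `ℓ∞`**: there is a linear map from bounded sequences which preserves absolute values
(hence the lattice operations) and is an isometry for the sup norm on bounded sequences. -/
def HasLatticeCopyLinf (Mem : (α → ℝ) → Prop) (N : (α → ℝ) → ℝ) : Prop :=
  ∃ T : (ℕ → ℝ) → (α → ℝ),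
    (∀ x y, T (x + y) = T x + T y) ∧
    (∀ (c : ℝ) x, T (c • x) = c • T x) ∧
    (∀ x, T (fun n => |x n|) = fun t => |T x t|) ∧
    (∀ x : ℕ → ℝ, BddAbove (Set.range fun n => |x n|) →
      Mem (T x) ∧ N (T x) = ⨆ n, |x n|)

end BanachIdealSpace

open BanachIdealSpace

/-- The properties of the two admissible measures that are used. -/
def GoodM (μ : Measure ℝ) : Prop :=
  μ ≤ volume.restrict (Set.Ioi (0 : ℝ)) ∧
    ∀ t : ℝ, μ (Set.Iio t) = min (ENNReal.ofReal t) (μ Set.univ)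

lemma goodM_of {μ : Measure ℝ}
    (hμ : μ = volume.restrict (Set.Ioo (0 : ℝ) 1) ∨ μ = volume.restrict (Set.Ioi (0 : ℝ))) :
    GoodM μ := by
  rcases hμ with rfl | rfl
  · refine ⟨Measure.restrict_mono (fun x hx => hx.1) le_rfl, fun t => ?_⟩
    rw [Measure.restrict_apply measurableSet_Iio, Measure.restrict_apply_univ]
    have : Set.Iio t ∩ Set.Ioo (0 : ℝ) 1 = Set.Ioo 0 (min t 1) := by
      ext x; simp only [Set.mem_inter_iff, Set.mem_Iio, Set.mem_Ioo, lt_min_iff]; tauto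
    rw [this, Real.volume_Ioo, Real.volume_Ioo, sub_zero, sub_zero]
    exact (ENNReal.ofReal_mono.map_min)
  · refine ⟨le_rfl, fun t => ?_⟩
    rw [Measure.restrict_apply measurableSet_Iio, Measure.restrict_apply_univ]
    have : Set.Iio t ∩ Set.Ioi (0 : ℝ) = Set.Ioo 0 t := by
      ext x; simp only [Set.mem_inter_iff, Set.mem_Iio, Set.mem_Ioo, Set.mem_Ioi]; tauto
    rw [this, Real.volume_Ioo, Real.volume_Ioi, sub_zero]
    simp

lemma GoodM.ae_pos {μ : Measure ℝ} (hG : GoodM μ) : ∀ᵐ x ∂μ, 0 < x := by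
  have h : ∀ᵐ x ∂(volume.restrict (Set.Ioi (0 : ℝ))), 0 < x :=
    ae_restrict_mem measurableSet_Ioi
  exact (Measure.absolutelyContinuous_of_le hG.1).ae_le h

lemma GoodM.le_volume {μ : Measure ℝ} (hG : GoodM μ) : μ ≤ volume :=
  hG.1.trans Measure.restrict_le_self

lemma nullMeas {μ : Measure ℝ} {f : ℝ → ℝ} (hf : AEMeasurable f μ) (l : ℝ) :
    NullMeasurableSet {x | l < |f x|} μ := by
  have h : AEMeasurable (fun x => |f x|) μ := by fun_prop
  exact h.nullMeasurable measurableSet_Ioi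

lemma exists_small {μ : Measure ℝ} {f : ℝ → ℝ} (hf : AEMeasurable f μ)
    (hfin : ∃ L : ℝ, 0 < L ∧ μ {x | L < |f x|} < ⊤) {t : ℝ} (ht : 0 < t) :
    ∃ l : ℝ, 0 < l ∧ μ {x | l < |f x|} ≤ ENNReal.ofReal t := by
  obtain ⟨L, hL, hLf⟩ := hfin
  have h := tendsto_measure_iInter_atTop (μ := μ) (s := fun n : ℕ => {x | L + n < |f x|})
    (fun n => nullMeas hf _)
    (by
      intro m n hmn x hx
      simp only [Set.mem_ofPred_eq] at hx ⊢
      have : (m : ℝ) ≤ n := by exact_mod_cast hmn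
      linarith)
    ⟨0, by simpa using hLf.ne⟩
  have he : (⋂ n : ℕ, {x | L + n < |f x|}) = ∅ := by
    ext x
    simp only [Set.mem_iInter, Set.mem_ofPred_eq, Set.mem_empty_iff_false, iff_false, not_forall,
      not_lt]
    obtain ⟨n, hn⟩ := exists_nat_ge |f x|
    exact ⟨n, by linarith⟩
  rw [he, measure_empty] at h
  have h2 := (h.eventually (gt_mem_nhds (ENNReal.ofReal_pos.2 ht))).exists
  obtain ⟨n, hn⟩ := h2
  exact ⟨L + n, by positivity, hn.le⟩

lemma exists_right {μ : Measure ℝ} {f : ℝ → ℝ} {l : ℝ} {c : ENNReal}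
    (h : c < μ {x | l < |f x|}) {m : ℝ} (hm : l < m) :
    ∃ l', l < l' ∧ l' ≤ m ∧ c < μ {x | l' < |f x|} := by
  have h1 := tendsto_measure_iUnion_atTop (μ := μ)
    (s := fun n : ℕ => {x | l + 1 / ((n : ℝ) + 1) < |f x|})
    (by
      intro a b hab x hx
      simp only [Set.mem_ofPred_eq] at hx ⊢
      have := Nat.one_div_le_one_div (α := ℝ) hab
      linarith)
  have he : (⋃ n : ℕ, {x | l + 1 / ((n : ℝ) + 1) < |f x|}) = {x | l < |f x|} := by
    ext x
    simp only [Set.mem_iUnion, Set.mem_ofPred_eq]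
    constructor
    · rintro ⟨n, hn⟩
      have : (0 : ℝ) < 1 / ((n : ℝ) + 1) := Nat.one_div_pos_of_nat
      linarith
    · intro hx
      obtain ⟨n, hn⟩ := exists_nat_one_div_lt (sub_pos.2 hx)
      exact ⟨n, by linarith⟩
  rw [he] at h1
  have h2 := h1.eventually (lt_mem_nhds h)
  have h3 : ∀ᶠ n : ℕ in atTop, 1 / ((n : ℝ) + 1) < m - l :=
    tendsto_one_div_add_atTop_nhds_zero_nat.eventually (gt_mem_nhds (sub_pos.2 hm))
  obtain ⟨n, hn, hn'⟩ := (h2.and h3).exists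
  have : (0 : ℝ) < 1 / ((n : ℝ) + 1) := Nat.one_div_pos_of_nat
  exact ⟨_, by linarith, by linarith, hn⟩

lemma rear_nonneg (μ : Measure ℝ) (f : ℝ → ℝ) (t : ℝ) : 0 ≤ rear μ f t :=
  Real.sInf_nonneg fun _ hx => hx.1.le

lemma rear_bdd (μ : Measure ℝ) (f : ℝ → ℝ) (t : ℝ) :
    BddBelow {lam : ℝ | 0 < lam ∧ μ {x | lam < |f x|} ≤ ENNReal.ofReal t} :=
  ⟨0, fun _ hx => hx.1.le⟩

lemma lt_rear_iff {μ : Measure ℝ} {f : ℝ → ℝ} (hf : AEMeasurable f μ)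
    (hfin : ∃ L : ℝ, 0 < L ∧ μ {x | L < |f x|} < ⊤) {t l : ℝ} (ht : 0 < t) (hl : 0 < l) :
    l < rear μ f t ↔ ENNReal.ofReal t < μ {x | l < |f x|} := by
  constructor
  · intro h
    by_contra hc
    exact absurd (csInf_le (rear_bdd μ f t) ⟨hl, not_lt.1 hc⟩) (not_le.2 h)
  · intro h
    obtain ⟨l', hl', -, h'⟩ := exists_right h (lt_add_one l)
    refine lt_of_lt_of_le hl' (le_csInf (exists_small hf hfin ht) ?_)
    rintro b ⟨hb, hb'⟩
    by_contra hc
    have : μ {x | l' < |f x|} ≤ μ {x | b < |f x|} :=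
      measure_mono fun x hx => lt_trans (not_le.1 hc) hx
    exact absurd (h'.trans_le (this.trans hb')) (lt_irrefl _)

lemma rear_equi {μ : Measure ℝ} (hG : GoodM μ) {f : ℝ → ℝ} (hf : AEMeasurable f μ)
    (hfin : ∃ L : ℝ, 0 < L ∧ μ {x | L < |f x|} < ⊤) :
    AEMeasurable (rear μ f) μ ∧
      ∀ l : ℝ, 0 < l → μ {x | l < |rear μ f x|} = μ {x | l < |f x|} := by
  constructor
  · have h : AEMeasurable (rear μ f) (volume.restrict (Set.Ioi (0 : ℝ))) := by
      refine aemeasurable_restrict_of_antitoneOn measurableSet_Ioi ?_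
      intro s hs t ht hst
      refine csInf_le_csInf (rear_bdd μ f t) (exists_small hf hfin hs) ?_
      rintro l ⟨hl, hl'⟩
      exact ⟨hl, hl'.trans (ENNReal.ofReal_le_ofReal hst)⟩
    exact h.mono_measure hG.1
  · intro l hl
    have h1 : μ {x | l < |rear μ f x|} = μ {x | ENNReal.ofReal x < μ {x | l < |f x|}} := by
      refine measure_congr ?_
      filter_upwards [hG.ae_pos] with x hx
      refine propext ?_
      change l < |rear μ f x| ↔ ENNReal.ofReal x < μ {x | l < |f x|}
      rw [abs_of_nonneg (rear_nonneg μ f x)]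
      exact lt_rear_iff hf hfin hx hl
    rw [h1]
    set D := μ {x | l < |f x|} with hD
    have hDu : D ≤ μ Set.univ := measure_mono (Set.subset_univ _)
    by_cases hDt : D = ⊤
    · have : {x : ℝ | ENNReal.ofReal x < D} = Set.univ := by
        ext x; simp [hDt]
      rw [this]
      exact le_antisymm (hDt ▸ le_top) hDu
    · have h2 : μ {x : ℝ | ENNReal.ofReal x < D} = μ (Set.Iio D.toReal) := by
        refine measure_congr ?_
        filter_upwards [hG.ae_pos] with x hx
        refine propext ?_
        change ENNReal.ofReal x < D ↔ x < D.toReal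
        exact ENNReal.ofReal_lt_iff_lt_toReal hx.le hDt
      rw [h2, hG.2, ENNReal.ofReal_toReal hDt, min_eq_left hDu]

lemma mem_fin {μ : Measure ℝ} {X : BanachIdealSpace ℝ μ} (hs : X.Symmetric)
    {f : ℝ → ℝ} (hf : X.Mem f) : ∃ L : ℝ, 0 < L ∧ μ {x | L < |f x|} < ⊤ := by
  by_contra hc
  push Not at hc
  have hc' : ∀ L : ℝ, 0 < L → μ {x | L < |f x|} = ⊤ := fun L hL => top_le_iff.1 (hc L hL)
  have h2 : X.N ((2 : ℝ) • f) = X.N f := by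
    refine (hs _ f (X.measurable _ (X.mem_smul 2 f hf)) ?_ hf).2
    intro l hl
    rw [hc' l hl]
    have : {x | l < |((2 : ℝ) • f) x|} = {x | l / 2 < |f x|} := by
      ext x
      simp only [Set.mem_ofPred_eq, Pi.smul_apply, smul_eq_mul, abs_mul, abs_two]
      constructor <;> intro h <;> linarith
    rw [this, hc' _ (by linarith)]
  rw [X.N_smul, abs_two] at h2
  have h0 := X.N_eq_zero f hf (by linarith)
  have h3 : μ {x | (1 : ℝ) < |f x|} = 0 := by
    have : ∀ᵐ x ∂μ, ¬ (1 < |f x|) := by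
      filter_upwards [h0] with x hx
      simp [hx]
    simpa [ae_iff] using this
  rw [hc' 1 one_pos] at h3
  exact ENNReal.top_ne_zero h3

/-- Domination of distribution functions implies domination of norms. -/
lemma dom {μ : Measure ℝ} (hG : GoodM μ) {X : BanachIdealSpace ℝ μ} (hs : X.Symmetric)
    {k h : ℝ → ℝ} (hk : AEMeasurable k μ) (hh : X.Mem h)
    (hd : ∀ l : ℝ, 0 < l → μ {x | l < |k x|} ≤ μ {x | l < |h x|}) :
    X.Mem k ∧ X.N k ≤ X.N h := by
  have hfh := mem_fin hs hh
  have hfk : ∃ L : ℝ, 0 < L ∧ μ {x | L < |k x|} < ⊤ := by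
    obtain ⟨L, hL, h'⟩ := hfh
    exact ⟨L, hL, (hd L hL).trans_lt h'⟩
  have hhm := X.measurable h hh
  obtain ⟨mk, ek⟩ := rear_equi hG hk hfk
  obtain ⟨mh, eh⟩ := rear_equi hG hhm hfh
  obtain ⟨a1, a2⟩ := hs (rear μ h) h mh eh hh
  obtain ⟨b1, b2⟩ := X.ideal (rear μ k) (rear μ h) mk (by
    filter_upwards [hG.ae_pos] with t ht
    rw [abs_of_nonneg (rear_nonneg μ k t), abs_of_nonneg (rear_nonneg μ h t)]
    refine csInf_le_csInf (rear_bdd μ k t) (exists_small hhm hfh ht) ?_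
    rintro l ⟨hl, hl'⟩
    exact ⟨hl, (hd l hl).trans hl'⟩) a1
  obtain ⟨c1, c2⟩ := hs k (rear μ k) hk (fun l hl => (ek l hl).symm) b1
  exact ⟨c1, by rw [c2, ← a2]; exact b2⟩

lemma zero_mem_oc {μ : Measure ℝ} (X : BanachIdealSpace ℝ μ) : (0 : ℝ → ℝ) ∈ X.oc := by
  refine ⟨X.mem_zero, fun u hu hb _ _ => ?_⟩
  have : ∀ n, X.N (u n) = 0 := by
    intro n
    refine le_antisymm ?_ (X.N_nonneg _)
    rw [← X.N_zero]
    refine (X.ideal (u n) 0 (X.measurable _ (hu n)) ?_ X.mem_zero).2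
    filter_upwards [hb n] with x hx
    rw [abs_of_nonneg hx.1]
    exact hx.2
  simp [this]

lemma ind_dom {μ : Measure ℝ} (hG : GoodM μ) {X : BanachIdealSpace ℝ μ} (hs : X.Symmetric)
    {A E : Set ℝ} (hA : NullMeasurableSet A μ) (hAE : μ A ≤ μ E)
    (hE : X.Mem (E.indicator fun _ => (1 : ℝ))) :
    X.Mem (A.indicator fun _ => (1 : ℝ)) ∧
      X.N (A.indicator fun _ => (1 : ℝ)) ≤ X.N (E.indicator fun _ => (1 : ℝ)) := by
  have key : ∀ (B : Set ℝ) (l : ℝ), 0 < l →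
      {x | l < |B.indicator (fun _ => (1 : ℝ)) x|} = if l < 1 then B else ∅ := by
    intro B l hl
    ext x
    by_cases hx : x ∈ B <;> by_cases hl1 : l < 1 <;> simp [hx, hl1, hl.le]
  refine dom hG hs ?_ hE ?_
  · exact (aemeasurable_const (b := (1 : ℝ))).indicator₀ hA
  · intro l hl
    rw [key A l hl, key E l hl]
    split_ifs
    · exact hAE
    · exact le_rfl

/-- If `X_a` is nontrivial then indicators of small sets have small norms. -/
lemma small_ind {μ : Measure ℝ} (hG : GoodM μ) {X : BanachIdealSpace ℝ μ} (hs : X.Symmetric)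
    {g : ℝ → ℝ} (hg : g ∈ X.oc) (hg0 : ¬ ∀ᵐ x ∂μ, g x = 0) :
    ∀ ε : ℝ, 0 < ε → ∃ E : Set ℝ, 0 < μ E ∧ μ E < ⊤ ∧
      X.Mem (E.indicator fun _ => (1 : ℝ)) ∧ X.N (E.indicator fun _ => (1 : ℝ)) < ε := by
  intro ε hε
  obtain ⟨hgm, hgo⟩ := hg
  have hga := X.measurable g hgm
  obtain ⟨g', hg', hgg'⟩ := hga
  have hlev : ∃ n : ℕ, μ {x | 1 / ((n : ℝ) + 1) < |g' x|} ≠ 0 := by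
    by_contra hc
    push Not at hc
    apply hg0
    have h1 : ∀ᵐ x ∂μ, ∀ n : ℕ, ¬ (1 / ((n : ℝ) + 1) < |g' x|) := by
      rw [ae_all_iff]
      intro n
      simpa [ae_iff] using hc n
    filter_upwards [h1, hgg'] with x hx hx'
    rw [hx']
    by_contra h0
    obtain ⟨n, hn⟩ := exists_nat_one_div_lt (abs_pos.2 h0)
    exact hx n hn
  obtain ⟨n0, hn0⟩ := hlev
  set δ : ℝ := 1 / ((n0 : ℝ) + 1) with hδ
  have hδ0 : 0 < δ := Nat.one_div_pos_of_nat
  set E : Set ℝ := {x | δ < |g' x|} with hEdef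
  have hEm : MeasurableSet E := measurableSet_lt measurable_const (by fun_prop)
  obtain ⟨x0, -, hx0⟩ := exists_mem_forall_mem_nhdsWithin_pos_measure hn0
  set F : ℕ → Set ℝ := fun n => E ∩ Set.Ioo (x0 - 1 / ((n : ℝ) + 1)) (x0 + 1 / ((n : ℝ) + 1))
    with hF
  have hFm : ∀ n, MeasurableSet (F n) := fun n => hEm.inter measurableSet_Ioo
  have hFpos : ∀ n, 0 < μ (F n) := by
    intro n
    apply hx0
    have : (0 : ℝ) < 1 / ((n : ℝ) + 1) := Nat.one_div_pos_of_nat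
    exact inter_mem self_mem_nhdsWithin
      (mem_nhdsWithin_of_mem_nhds (Ioo_mem_nhds (by linarith) (by linarith)))
  have hFfin : ∀ n, μ (F n) < ⊤ := by
    intro n
    refine (measure_mono Set.inter_subset_right).trans_lt ((hG.le_volume _).trans_lt ?_)
    rw [Real.volume_Ioo]
    exact ENNReal.ofReal_lt_top
  have hdom : ∀ n, ∀ᵐ x ∂μ, 0 ≤ (F n).indicator (fun _ => δ) x ∧
      (F n).indicator (fun _ => δ) x ≤ |g x| := by
    intro n
    filter_upwards [hgg'] with x hx
    by_cases hxF : x ∈ F n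
    · have : δ < |g' x| := hxF.1
      simp only [Set.indicator_of_mem hxF]
      rw [hx]
      exact ⟨hδ0.le, this.le⟩
    · simp [hxF]
  have hmem : ∀ n, X.Mem ((F n).indicator (fun _ => δ)) := by
    intro n
    refine (X.ideal _ g (measurable_const.indicator (hFm n)).aemeasurable ?_ hgm).1
    filter_upwards [hdom n] with x hx
    rw [abs_of_nonneg hx.1]; exact hx.2
  have hlim := hgo (fun n => (F n).indicator (fun _ => δ)) hmem hdom
    (by
      intro n
      refine Filter.Eventually.of_forall fun x => ?_
      refine Set.indicator_le_indicator_of_subset ?_ (fun _ => hδ0.le) x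
      have := Nat.one_div_le_one_div (α := ℝ) (Nat.le_succ n)
      push_cast at this
      refine Set.inter_subset_inter_right _ (Set.Ioo_subset_Ioo ?_ ?_) <;> push_cast <;> linarith)
    (by
      have hne : ∀ᵐ x ∂μ, x ≠ x0 := by
        rw [ae_iff]
        have : μ {x0} ≤ 0 := (hG.le_volume _).trans (by simp)
        simpa using this
      filter_upwards [hne] with x hx
      refine tendsto_const_nhds.congr' ?_
      have h3 : ∀ᶠ n : ℕ in atTop, 1 / ((n : ℝ) + 1) < |x - x0| :=
        tendsto_one_div_add_atTop_nhds_zero_nat.eventually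
          (gt_mem_nhds (abs_pos.2 (sub_ne_zero.2 hx)))
      filter_upwards [h3] with n hn
      rw [Set.indicator_of_notMem]
      rintro ⟨-, h1, h2⟩
      have : |x - x0| < 1 / ((n : ℝ) + 1) := by
        rw [abs_lt]; constructor <;> linarith
      linarith)
  obtain ⟨n, hn⟩ := (hlim.eventually (gt_mem_nhds (mul_pos hε hδ0))).exists
  have heq : (F n).indicator (fun _ => (1 : ℝ)) = δ⁻¹ • (F n).indicator (fun _ => δ) := by
    ext x
    by_cases hx : x ∈ F n <;> simp [hx, hδ0.ne']
  refine ⟨F n, hFpos n, hFfin n, ?_, ?_⟩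
  · rw [heq]; exact X.mem_smul _ _ (hmem n)
  · rw [heq, X.N_smul, abs_of_pos (inv_pos.2 hδ0), inv_mul_lt_iff₀ hδ0]
    linarith

lemma fin_ind {μ : Measure ℝ} (hG : GoodM μ) {X : BanachIdealSpace ℝ μ} (hs : X.Symmetric)
    {E : Set ℝ} (hE0 : 0 < μ E) (hEt : μ E < ⊤)
    (hE : X.Mem (E.indicator fun _ => (1 : ℝ)))
    {A : Set ℝ} (hA : NullMeasurableSet A μ) (hAt : μ A < ⊤) :
    X.Mem (A.indicator fun _ => (1 : ℝ)) := by
  set s : ℝ := (μ E).toReal with hsd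
  have hs0 : 0 < s := ENNReal.toReal_pos hE0.ne' hEt.ne
  have step : ∀ m : ℕ, X.Mem ((Set.Iio (m * s)).indicator fun _ => (1 : ℝ)) := by
    intro m
    induction m with
    | zero =>
      refine (ind_dom hG hs measurableSet_Iio.nullMeasurableSet ?_ hE).1
      rw [hG.2]; simp
    | succ m ih =>
      have h2 : X.Mem ((Set.Ico (m * s) ((m + 1 : ℕ) * s)).indicator fun _ => (1 : ℝ)) := by
        refine (ind_dom hG hs measurableSet_Ico.nullMeasurableSet ?_ hE).1
        refine (hG.le_volume _).trans ?_
        rw [Real.volume_Ico]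
        have : ((m + 1 : ℕ) * s - m * s : ℝ) = s := by push_cast; ring
        rw [this, hsd, ENNReal.ofReal_toReal hEt.ne]
      have h3 := X.mem_add _ _ ih h2
      have hle : (m * s : ℝ) ≤ (m + 1 : ℕ) * s := by push_cast; nlinarith
      have hdj : Disjoint (Set.Iio (m * s : ℝ)) (Set.Ico (m * s) ((m + 1 : ℕ) * s)) := by
        rw [Set.disjoint_left]
        intro x hx hx'
        exact absurd hx'.1 (not_le.2 hx)
      have h4 := Set.indicator_union_of_disjoint hdj (fun _ => (1 : ℝ))
      rw [Set.Iio_union_Ico_eq_Iio hle] at h4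
      rw [h4]
      exact h3
  obtain ⟨m, hm⟩ := exists_nat_ge ((μ A).toReal / s)
  refine (ind_dom hG hs hA ?_ (step m)).1
  rw [hG.2]
  refine le_min ?_ (measure_mono (Set.subset_univ _))
  rw [← ENNReal.ofReal_toReal hAt.ne]
  exact ENNReal.ofReal_le_ofReal ((div_le_iff₀ hs0).1 hm)

/-- Bounded functions with support of finite measure are order continuous when `X_a` is
nontrivial. -/
lemma bdd_mem_oc {μ : Measure ℝ} (hG : GoodM μ) {X : BanachIdealSpace ℝ μ} (hs : X.Symmetric)
    {g : ℝ → ℝ} (hg : g ∈ X.oc) (hg0 : ¬ ∀ᵐ x ∂μ, g x = 0)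
    {w : ℝ → ℝ} {B : Set ℝ} {M : ℝ} (hM : 0 < M) (hw : AEMeasurable w μ)
    (hB : NullMeasurableSet B μ) (hBt : μ B < ⊤) (hwM : ∀ x, |w x| ≤ M)
    (hwB : ∀ x, x ∉ B → w x = 0) : w ∈ X.oc := by
  have hsm := small_ind hG hs hg hg0
  obtain ⟨E1, hE1, hE1t, hE1m, -⟩ := hsm 1 one_pos
  have hfi : ∀ {A : Set ℝ}, NullMeasurableSet A μ → μ A < ⊤ →
      X.Mem (A.indicator fun _ => (1 : ℝ)) := fun hA hAt => fin_ind hG hs hE1 hE1t hE1m hA hAt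
  have hBm := hfi hB hBt
  constructor
  · refine (X.ideal w (M • B.indicator fun _ => (1 : ℝ)) hw ?_ (X.mem_smul _ _ hBm)).1
    refine Filter.Eventually.of_forall fun x => ?_
    by_cases hx : x ∈ B
    · simpa [hx, abs_of_pos hM] using hwM x
    · simp [hx, hwB x hx]
  · intro u hu hb _ hlim
    have hum : ∀ n, AEMeasurable (u n) μ := fun n => X.measurable _ (hu n)
    rw [Metric.tendsto_atTop]
    intro ε hε
    set NB := X.N (B.indicator fun _ => (1 : ℝ)) with hNB
    have hNB0 : 0 ≤ NB := X.N_nonneg _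
    set η : ℝ := ε / (2 * (NB + 1)) with hη
    have hη0 : 0 < η := by positivity
    obtain ⟨E, hE0, -, hEm, hEN⟩ := hsm (ε / (2 * M)) (by positivity)
    have hmeas : Tendsto (fun n => μ (B ∩ {x | η < |u n x|})) atTop (𝓝 0) := by
      have : IsFiniteMeasure (μ.restrict B) := ⟨by simpa using hBt⟩
      have ht : TendstoInMeasure (μ.restrict B) u atTop (fun _ => (0 : ℝ)) := by
        refine tendstoInMeasure_of_tendsto_ae
          (fun n => (hum n).restrict.aestronglyMeasurable) ?_
        exact ae_restrict_of_ae hlim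
      have h1 := ht (ENNReal.ofReal η) (ENNReal.ofReal_pos.2 hη0)
      refine tendsto_of_tendsto_of_tendsto_of_le_of_le tendsto_const_nhds h1
        (fun _ => zero_le) ?_
      intro n
      change μ (B ∩ {x | η < |u n x|}) ≤ _
      rw [Set.inter_comm]
      refine (Measure.le_restrict_apply B _).trans (measure_mono ?_)
      intro x hx
      simp only [Set.mem_ofPred_eq] at hx ⊢
      rw [edist_dist, Real.dist_eq, sub_zero]
      exact ENNReal.ofReal_le_ofReal hx.le
    have hev := hmeas.eventually (gt_mem_nhds hE0)
    obtain ⟨n1, hn1⟩ := eventually_atTop.1 hev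
    refine ⟨n1, fun n hn => ?_⟩
    rw [Real.dist_eq, sub_zero, abs_of_nonneg (X.N_nonneg _)]
    set C := B ∩ {x | η < |u n x|} with hC
    have hCm : NullMeasurableSet C μ := hB.inter (nullMeas (hum n) η)
    obtain ⟨c1, c2⟩ := ind_dom hG hs hCm (hn1 n hn).le hEm
    have hle : X.N (u n) ≤ X.N ((η • B.indicator fun _ => (1 : ℝ)) +
        M • C.indicator fun _ => (1 : ℝ)) := by
      refine (X.ideal _ _ (hum n) ?_ (X.mem_add _ _ (X.mem_smul _ _ hBm)
        (X.mem_smul _ _ c1))).2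
      filter_upwards [hb n] with x hx
      refine le_trans ?_ (le_abs_self _)
      rw [abs_of_nonneg hx.1]
      simp only [Pi.add_apply, Pi.smul_apply, smul_eq_mul]
      by_cases hxB : x ∈ B
      · by_cases hxC : x ∈ C
        · simp only [Set.indicator_of_mem hxB, Set.indicator_of_mem hxC]
          have := hwM x
          linarith [hx.2]
        · simp only [Set.indicator_of_mem hxB, Set.indicator_of_notMem hxC]
          have : ¬ (η < |u n x|) := fun h => hxC ⟨hxB, h⟩
          have := le_abs_self (u n x)
          linarith
      · have hxC : x ∉ C := fun h => hxB h.1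
        simp only [Set.indicator_of_notMem hxB, Set.indicator_of_notMem hxC]
        have := hx.2
        rw [hwB x hxB, abs_zero] at this
        linarith
    have hadd := X.N_add _ _ (X.mem_smul η _ hBm) (X.mem_smul M _ c1)
    rw [X.N_smul, X.N_smul, abs_of_pos hη0, abs_of_pos hM] at hadd
    have e1 : η * NB < ε / 2 := by
      have : η * (NB + 1) = ε / 2 := by rw [hη]; field_simp
      nlinarith
    have e2 : M * X.N (C.indicator fun _ => (1 : ℝ)) < ε / 2 := by
      have h := c2.trans_lt hEN
      rw [lt_div_iff₀ (by positivity)] at h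
      linarith
    linarith

/-- Order continuous elements are approximated by bounded functions with support of finite
measure. -/
lemma oc_approx {μ : Measure ℝ} (hG : GoodM μ) {X : BanachIdealSpace ℝ μ}
    {g : ℝ → ℝ} (hg : g ∈ X.oc) {ε : ℝ} (hε : 0 < ε) :
    ∃ (g' : ℝ → ℝ) (n : ℕ), X.Mem g' ∧ X.N (g - g') < ε ∧ (∀ x, |g' x| ≤ n) ∧
      ∃ A : Set ℝ, μ A < ⊤ ∧ ∀ x, x ∉ A → g' x = 0 := by
  obtain ⟨hgm, hgo⟩ := hg
  have hga := X.measurable g hgm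
  set S : ℕ → Set ℝ := fun n => {x | |g x| ≤ n} ∩ Set.Ioo (-(n : ℝ)) n with hS
  have hSm : ∀ n, NullMeasurableSet (S n) μ := by
    intro n
    refine NullMeasurableSet.inter ?_ measurableSet_Ioo.nullMeasurableSet
    have h : AEMeasurable (fun x => |g x|) μ := by fun_prop
    exact h.nullMeasurable measurableSet_Iic
  have hum : ∀ n, AEMeasurable ((S n)ᶜ.indicator fun x => |g x|) μ := by
    intro n
    have h : AEMeasurable (fun x => |g x|) μ := by fun_prop
    exact h.indicator₀ (hSm n).compl
  have hb : ∀ n x, 0 ≤ (S n)ᶜ.indicator (fun x => |g x|) x ∧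
      (S n)ᶜ.indicator (fun x => |g x|) x ≤ |g x| := by
    intro n x
    by_cases hx : x ∈ S n <;> simp [hx]
  have hlim := hgo (fun n => (S n)ᶜ.indicator fun x => |g x|)
    (fun n => (X.ideal _ g (hum n) (Filter.Eventually.of_forall fun x => by
      rw [abs_of_nonneg (hb n x).1]; exact (hb n x).2) hgm).1)
    (fun n => Filter.Eventually.of_forall fun x => hb n x)
    (fun n => Filter.Eventually.of_forall fun x => by
      refine Set.indicator_le_indicator_of_subset ?_ (fun _ => abs_nonneg _) x
      rw [Set.compl_subset_compl]
      rintro y ⟨h1, h2, h3⟩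
      have h1' : |g y| ≤ n := h1
      refine ⟨?_, ?_, ?_⟩
      · change |g y| ≤ ((n + 1 : ℕ) : ℝ)
        push_cast; linarith
      · push_cast; linarith
      · push_cast; linarith)
    (Filter.Eventually.of_forall fun x => by
      refine tendsto_const_nhds.congr' ?_
      obtain ⟨m, hm⟩ := exists_nat_gt (max |g x| |x|)
      filter_upwards [eventually_ge_atTop m] with n hn
      have hn' : (m : ℝ) ≤ n := by exact_mod_cast hn
      rw [Set.indicator_of_notMem]
      rw [Set.notMem_compl_iff]
      have h1 := (le_max_left |g x| |x|)
      have h2 := (le_max_right |g x| |x|)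
      refine ⟨?_, abs_lt.1 (by linarith)⟩
      change |g x| ≤ n
      linarith)
  obtain ⟨n, hn⟩ := (hlim.eventually (gt_mem_nhds hε)).exists
  have hg'm : AEMeasurable ((S n).indicator g) μ := hga.indicator₀ (hSm n)
  have hmem' : X.Mem ((S n).indicator g) := by
    refine (X.ideal _ g hg'm (Filter.Eventually.of_forall fun x => ?_) hgm).1
    by_cases hx : x ∈ S n <;> simp [hx]
  refine ⟨(S n).indicator g, n, hmem', ?_, ?_, S n, ?_, ?_⟩
  · refine lt_of_le_of_lt ?_ hn
    refine (X.ideal _ _ (hga.sub hg'm) (Filter.Eventually.of_forall fun x => ?_) ?_).2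
    · by_cases hx : x ∈ S n <;> simp [hx]
    · exact (X.ideal _ g (hum n) (Filter.Eventually.of_forall fun x => by
        rw [abs_of_nonneg (hb n x).1]; exact (hb n x).2) hgm).1
  · intro x
    by_cases hx : x ∈ S n
    · simpa [hx] using hx.1
    · simp [hx]
  · refine (measure_mono Set.inter_subset_right).trans_lt ((hG.le_volume _).trans_lt ?_)
    rw [Real.volume_Ioo]
    exact ENNReal.ofReal_lt_top
  · intro x hx
    simp [hx]

/-- Choice of the level used for truncation. -/
lemma exists_level {μ : Measure ℝ} {f : ℝ → ℝ} {n : ℝ} (hn : 0 ≤ n)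
    (hfin : μ {x | n < |f x|} < ⊤) {T : ENNReal} (hT : T < ⊤) :
    ∃ l0 : ℝ, l0 ≤ n ∧ μ {x | l0 < |f x|} < ⊤ ∧
      (T ≤ μ {x | l0 < |f x|} ∨ ∀ l, 0 < l → l < l0 → μ {x | l < |f x|} = ⊤) := by
  set S : Set ℝ := {l | 0 ≤ l ∧ μ {x | l < |f x|} < ⊤} with hS
  have hne : S.Nonempty := ⟨n, hn, hfin⟩
  have hbd : BddBelow S := ⟨0, fun _ h => h.1⟩
  have hcn : sInf S ≤ n := csInf_le hbd ⟨hn, hfin⟩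
  by_cases hc : μ {x | sInf S < |f x|} < ⊤
  · refine ⟨sInf S, hcn, hc, Or.inr fun l hl hl' => ?_⟩
    by_contra h
    exact absurd (csInf_le hbd ⟨hl.le, lt_top_iff_ne_top.2 h⟩) (not_le.2 hl')
  · have hct : μ {x | sInf S < |f x|} = ⊤ := not_lt_top_iff.1 hc
    have hlt : sInf S < n := by
      refine lt_of_le_of_ne hcn ?_
      intro h
      rw [h] at hc
      exact hc hfin
    obtain ⟨l', h1, h2, h3⟩ := exists_right (c := T) (by rw [hct]; exact hT) hlt
    refine ⟨l', h2, ?_, Or.inl h3.le⟩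
    obtain ⟨b, hb, hbl⟩ := exists_lt_of_csInf_lt hne h1
    exact (measure_mono fun x hx => lt_trans hbl hx).trans_lt hb.2

lemma dist_le {μ : Measure ℝ} (hG : GoodM μ) {X : BanachIdealSpace ℝ μ} (hs : X.Symmetric)
    {f₁ f₂ : ℝ → ℝ} (h1 : X.Mem f₁) (h2 : X.Mem f₂)
    (he : ∀ l : ℝ, 0 < l → μ {x | l < |f₁ x|} = μ {x | l < |f₂ x|}) :
    distIn X.N f₁ X.oc ≤ distIn X.N f₂ X.oc := by
  have hm1 := X.measurable _ h1
  have hm2 := X.measurable _ h2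
  have hbdd : BddBelow ((fun g => X.N (f₁ - g)) '' X.oc) :=
    ⟨0, by rintro _ ⟨g, -, rfl⟩; exact X.N_nonneg _⟩
  refine le_csInf ⟨_, ⟨0, zero_mem_oc X, rfl⟩⟩ ?_
  rintro _ ⟨g, hg, rfl⟩
  change distIn X.N f₁ X.oc ≤ X.N (f₂ - g)
  by_cases hg0 : ∀ᵐ x ∂μ, g x = 0
  · have e1 : distIn X.N f₁ X.oc ≤ X.N (f₁ - 0) :=
      csInf_le hbdd ⟨0, zero_mem_oc X, rfl⟩
    rw [sub_zero] at e1
    have e2 := (hs f₁ f₂ hm1 he h2).2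
    have hmem : X.Mem (f₂ - g) := by
      have := X.mem_add _ _ h2 (X.mem_smul (-1) g hg.1)
      rwa [neg_one_smul, ← sub_eq_add_neg] at this
    have e3 := (X.ideal f₂ (f₂ - g) hm2 (by
      filter_upwards [hg0] with x hx
      simp [hx]) hmem).2
    linarith
  · refine le_of_forall_pos_le_add fun ε hε => ?_
    obtain ⟨g', n0, hg'm, hg'N, hg'b, A, hAt, hg'A⟩ := oc_approx hG hg hε
    obtain ⟨L, hL, hLf⟩ := mem_fin hs h1
    set n : ℝ := n0 + L with hn
    have hn0 : 0 < n := by positivity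
    have hnf : μ {x | n < |f₁ x|} < ⊤ :=
      lt_of_le_of_lt (measure_mono fun x (hx : n < |f₁ x|) =>
        show L < |f₁ x| from lt_of_le_of_lt (by rw [hn]; linarith [n0.cast_nonneg (α := ℝ)]) hx) hLf
    have hg'n : ∀ x, |g' x| ≤ n := fun x => (hg'b x).trans (by linarith)
    obtain ⟨l0, hl0n, hl0f, hl0⟩ := exists_level hn0.le hnf
      (T := μ {x | n < |f₁ x|} + μ A) (ENNReal.add_lt_top.2 ⟨hnf, hAt⟩)
    set B : Set ℝ := {x | l0 < |f₁ x|} with hB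
    have hBm : NullMeasurableSet B μ := nullMeas hm1 l0
    set w : ℝ → ℝ := B.indicator (fun x => max (-n) (min (f₁ x) n)) with hw
    have hwm : AEMeasurable w μ := by
      refine AEMeasurable.indicator₀ ?_ hBm
      fun_prop
    have hwoc : w ∈ X.oc := by
      refine bdd_mem_oc hG hs hg hg0 hn0 hwm hBm hl0f ?_ ?_
      · intro x
        by_cases hx : x ∈ B
        · simp only [hw, Set.indicator_of_mem hx]
          rw [abs_le]
          exact ⟨le_max_left _ _, max_le (by linarith) (min_le_right _ _)⟩
        · simp only [hw, Set.indicator_of_notMem hx, abs_zero]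
          exact hn0.le
      · intro x hx
        simp [hw, hx]
    have e1 : distIn X.N f₁ X.oc ≤ X.N (f₁ - w) := csInf_le hbdd ⟨w, hwoc, rfl⟩
    have hsub : ∀ a b, X.Mem a → X.Mem b → X.Mem (a - b) := by
      intro a b ha hb
      have := X.mem_add _ _ ha (X.mem_smul (-1) b hb)
      rwa [neg_one_smul, ← sub_eq_add_neg] at this
    have hmem : X.Mem (f₂ - g') := hsub _ _ h2 hg'm
    have e2 : X.N (f₁ - w) ≤ X.N (f₂ - g') := by
      refine (dom hG hs (hm1.sub hwm) hmem fun l hl => ?_).2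
      set P : Set ℝ := {x | n + l < |f₂ x|} with hP
      set Q : Set ℝ := {x | l < |f₂ x| ∧ |f₂ x| ≤ n + l} \ A with hQ
      have hPn : μ {x | n + l < |f₁ x|} = μ P := he _ (by linarith)
      have hPle : μ P ≤ μ {x | n < |f₁ x|} := by
        rw [← hPn]
        exact measure_mono fun x (hx : n + l < |f₁ x|) =>
          show n < |f₁ x| from lt_trans (by linarith) hx
      have hPQ : μ P + μ Q ≤ μ {x | l < |(f₂ - g') x|} := by
        have hdj : Disjoint Q P := by
          rw [Set.disjoint_left]
          intro x hx hx'
          exact absurd hx.1.2 (not_le.2 hx')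
        rw [add_comm, ← measure_union₀ (nullMeas hm2 _) hdj.aedisjoint]
        refine measure_mono ?_
        rintro x (hx | hx)
        · have : g' x = 0 := hg'A x hx.2
          change l < |f₂ x - g' x|
          rw [this, sub_zero]
          exact hx.1.1
        · change l < |f₂ x - g' x|
          have hx' : n + l < |f₂ x| := hx
          have := abs_sub_abs_le_abs_sub (f₂ x) (g' x)
          linarith [hg'n x]
      have hdl : μ {x | l < |f₁ x|} ≤ μ P + μ Q + μ A := by
        rw [he l hl]
        refine (measure_mono (t := (P ∪ Q) ∪ A) ?_).trans
          ((measure_union_le _ _).trans (by gcongr; exact measure_union_le _ _))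
        intro x hx
        by_cases hxA : x ∈ A
        · exact Or.inr hxA
        · left
          by_cases hxP : x ∈ P
          · exact Or.inl hxP
          · exact Or.inr ⟨⟨hx, not_lt.1 hxP⟩, hxA⟩
      have hk : μ {x | l < |(f₁ - w) x|} ≤ μ P + μ ({x | l < |f₁ x|} \ B) := by
        rw [← hPn]
        refine (measure_mono ?_).trans (measure_union_le _ _)
        intro x hx
        have hx' : l < |f₁ x - w x| := hx
        by_cases hxB : x ∈ B
        · left
          simp only [hw, Set.indicator_of_mem hxB] at hx'
          change n + l < |f₁ x|
          rcases le_total (f₁ x) n with h | h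
          · rw [min_eq_left h] at hx'
            rcases le_total (-n) (f₁ x) with h' | h'
            · rw [max_eq_right h', sub_self, abs_zero] at hx'
              linarith
            · rw [max_eq_left h', abs_of_nonpos (by linarith)] at hx'
              rw [abs_of_nonpos (by linarith)]
              linarith
          · rw [min_eq_right h, max_eq_right (by linarith), abs_of_nonneg (by linarith)] at hx'
            rw [abs_of_nonneg (by linarith)]
            linarith
        · right
          simp only [hw, Set.indicator_of_notMem hxB, sub_zero] at hx'
          exact ⟨hx', hxB⟩
      rcases le_or_gt l0 l with hll | hll
      · have : {x | l < |f₁ x|} \ B = ∅ := by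
          rw [Set.sdiff_eq_empty]
          exact fun x hx => lt_of_le_of_lt hll hx
        rw [this, measure_empty, add_zero] at hk
        exact hk.trans (le_self_add.trans hPQ)
      · rcases hl0 with hT | htop
        · refine hk.trans (le_trans ?_ hPQ)
          refine add_le_add le_rfl ?_
          have hBsub : B ⊆ {x | l < |f₁ x|} := fun x hx => lt_trans hll hx
          rw [measure_sdiff hBsub hBm hl0f.ne]
          refine tsub_le_iff_right.2 ?_
          calc μ {x | l < |f₁ x|} ≤ μ P + μ Q + μ A := hdl
            _ ≤ μ {x | n < |f₁ x|} + μ Q + μ A := by gcongr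
            _ = μ Q + (μ {x | n < |f₁ x|} + μ A) := by ring
            _ ≤ μ Q + μ B := by gcongr
        · rw [htop l hl hll, top_le_iff] at hdl
          have : μ P + μ Q = ⊤ := by
            rcases ENNReal.add_eq_top.1 hdl with h | h
            · exact h
            · exact absurd h hAt.ne
          rw [this, top_le_iff] at hPQ
          rw [hPQ]
          exact le_top
    have e3 : X.N (f₂ - g') ≤ X.N (f₂ - g) + X.N (g - g') := by
      have := X.N_add _ _ (hsub _ _ h2 hg.1) (hsub _ _ hg.1 hg'm)
      rwa [sub_add_sub_cancel] at this
    linarith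

/-- Let `X` be a rearrangement invariant Banach function space on `(0,1)` or `(0,∞)` with
the Fatou property. Then for every `f ∈ X`, `dist (f, X_a) = dist (f*, X_a)`. -/
theorem dist_to_oc_eq_dist_rearrangement {μ : Measure ℝ}
    (hμ : μ = volume.restrict (Set.Ioo (0 : ℝ) 1) ∨ μ = volume.restrict (Set.Ioi (0 : ℝ)))
    (X : BanachIdealSpace ℝ μ) (hsymm : X.Symmetric) (hFatou : X.Fatou)
    (f : ℝ → ℝ) (hf : X.Mem f) :
    distIn X.N f X.oc = distIn X.N (rear μ f) X.oc := by
  have hG := goodM_of hμ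
  obtain ⟨hm, he⟩ := rear_equi hG (X.measurable f hf) (mem_fin hsymm hf)
  have hr := (hsymm (rear μ f) f hm he hf).1
  exact le_antisymm (dist_le hG hsymm hf hr fun l hl => (he l hl).symm)
    (dist_le hG hsymm hr hf he)
end

section
/- Let φ be a quasi-concave function on (0,∞) with lim_{t→0+} t/φ(t) = 0. Then the Marcinkiewicz space M_φ contains a function g with ‖g‖_{M_φ} = 1 and dist(g, (M_φ)_a) = 1; consequently M_φ contains a lattice isometric copy of ℓ∞. -/
open Filter Topology MeasureTheory Set

open BanachIdealSpace

/-- The Marcinkiewicz functional `t ↦ (φ(t)/t) ∫₀ᵗ f*(s) ds` on `(0,∞)`. -/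
noncomputable def marcFun (phi : ℝ → ℝ) (f : ℝ → ℝ) (t : ℝ) : ℝ :=
  (phi t / t) * ∫ s in Set.Ioo (0 : ℝ) t, rear (volume.restrict (Set.Ioi (0 : ℝ))) f s

/-- Membership in the Marcinkiewicz space `M_φ`. -/
def marcMem (phi : ℝ → ℝ) (f : ℝ → ℝ) : Prop :=
  AEMeasurable f (volume.restrict (Set.Ioi (0 : ℝ))) ∧
    BddAbove (Set.range fun t : {t : ℝ // 0 < t} => marcFun phi f t.1)

/-- The Marcinkiewicz norm `‖f‖_{M_φ} = sup_{t>0} (φ(t)/t) ∫₀ᵗ f*(s) ds`. -/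
noncomputable def marcNorm (phi : ℝ → ℝ) (f : ℝ → ℝ) : ℝ :=
  ⨆ t : {t : ℝ // 0 < t}, marcFun phi f t.1

local notation "μ₀" => (Measure.restrict (volume : Measure ℝ) (Set.Ioi (0 : ℝ)))

/-- The integrated rearrangement written through the distribution function. -/
noncomputable def marcK (f : ℝ → ℝ) (t : ℝ) : ENNReal :=
  ∫⁻ l in Set.Ioi (0 : ℝ), min (ENNReal.ofReal t) (μ₀ {x | l < |f x|})

theorem rear_lt_iff (f : ℝ → ℝ) {s l : ℝ} (hl : 0 < l)
    (hne : ∃ m : ℝ, 0 < m ∧ μ₀ {x | m < |f x|} ≤ ENNReal.ofReal s) :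
    l < rear μ₀ f s ↔ ENNReal.ofReal s < μ₀ {x | l < |f x|} := by
  have hbdd : BddBelow {lam : ℝ | 0 < lam ∧ μ₀ {x | lam < |f x|} ≤ ENNReal.ofReal s} :=
    ⟨0, fun y hy => hy.1.le⟩
  constructor
  · intro h
    by_contra hc
    push Not at hc
    exact absurd (csInf_le hbdd ⟨hl, hc⟩) (not_le.2 h)
  · intro h
    have hU : {x | l < |f x|} = ⋃ n : ℕ, {x | l + 1 / ((n : ℝ) + 1) < |f x|} := by
      ext x
      simp only [mem_setOf_eq, mem_iUnion]
      constructor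
      · intro hx
        obtain ⟨n, hn⟩ := exists_nat_one_div_lt (sub_pos.2 hx)
        exact ⟨n, by linarith⟩
      · rintro ⟨n, hn⟩
        have : (0 : ℝ) < 1 / ((n : ℝ) + 1) := by positivity
        linarith
    have hm : Monotone fun n : ℕ => {x | l + 1 / ((n : ℝ) + 1) < |f x|} := by
      intro a b hab x hx
      simp only [mem_setOf_eq] at hx ⊢
      have : 1 / ((b : ℝ) + 1) ≤ 1 / ((a : ℝ) + 1) := by
        apply one_div_le_one_div_of_le (by positivity)
        have : (a : ℝ) ≤ b := by exact_mod_cast hab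
        linarith
      linarith
    have ht := tendsto_measure_iUnion_atTop (μ := μ₀) hm
    rw [← hU] at ht
    obtain ⟨n, hn⟩ := (ht.eventually (lt_mem_nhds h)).exists
    have hpos : (0 : ℝ) < 1 / ((n : ℝ) + 1) := by positivity
    have : l + 1 / ((n : ℝ) + 1) ≤ rear μ₀ f s := by
      apply le_csInf hne
      rintro b ⟨hb, hb'⟩
      by_contra hc
      push Not at hc
      have h2 : μ₀ {x | l + 1 / ((n : ℝ) + 1) < |f x|} ≤ μ₀ {x | b < |f x|} :=
        measure_mono fun x hx => lt_trans hc hx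
      exact absurd (lt_of_lt_of_le hn (h2.trans hb')) (lt_irrefl _)
    linarith

theorem rear_nonneg_s10 (f : ℝ → ℝ) (s : ℝ) : 0 ≤ rear μ₀ f s :=
  Real.sInf_nonneg fun _ hy => hy.1.le

theorem nullMeas_lt {f : ℝ → ℝ} (hf : AEMeasurable f μ₀) (l : ℝ) :
    NullMeasurableSet {x | l < |f x|} μ₀ :=
  nullMeasurableSet_lt aemeasurable_const hf.abs

theorem exists_level_s10 {f : ℝ → ℝ} (hf : AEMeasurable f μ₀) {l : ℝ}
    (hfin : μ₀ {x | l < |f x|} ≠ ⊤) {s : ENNReal} (hs : 0 < s) (M : ℝ) :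
    ∃ m : ℝ, M ≤ m ∧ μ₀ {x | m < |f x|} ≤ s := by
  have h := tendsto_measure_iInter_atTop (μ := μ₀) (s := fun n : ℕ => {x | (l + n) < |f x|})
    (fun n => nullMeas_lt hf _) ?_ ⟨0, by simpa using hfin⟩
  · have he : (⋂ n : ℕ, {x | (l + n) < |f x|}) = ∅ := by
      ext x
      simp only [mem_iInter, mem_setOf_eq, mem_empty_iff_false, iff_false, not_forall, not_lt]
      obtain ⟨n, hn⟩ := exists_nat_gt (|f x| - l)
      exact ⟨n, by linarith⟩
    rw [he, measure_empty] at h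
    obtain ⟨N, hN⟩ := exists_nat_ge (M - l)
    obtain ⟨n, hn, hn'⟩ := ((h.eventually (gt_mem_nhds hs)).and (eventually_ge_atTop N)).exists
    refine ⟨l + n, ?_, le_of_lt hn⟩
    have : (N : ℝ) ≤ n := by exact_mod_cast hn'
    linarith
  · intro a b hab x hx
    have : (a : ℝ) ≤ b := by exact_mod_cast hab
    simp only [mem_setOf_eq] at hx ⊢
    linarith

theorem marcFun_eq (phi : ℝ → ℝ) {f : ℝ → ℝ} (hf : AEMeasurable f μ₀) {t : ℝ} (ht : 0 < t) :
    marcFun phi f t = phi t / t * (marcK f t).toReal := by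
  unfold marcFun
  congr 1
  by_cases hinf : ∀ l : ℝ, 0 < l → μ₀ {x | l < |f x|} = ⊤
  · have h1 : ∀ s, rear μ₀ f s = 0 := by
      intro s
      unfold rear
      have : {lam : ℝ | 0 < lam ∧ μ₀ {x | lam < |f x|} ≤ ENNReal.ofReal s} = ∅ := by
        ext l
        simp only [mem_setOf_eq, mem_empty_iff_false, iff_false, not_and]
        intro hl
        rw [hinf l hl]
        simp
      rw [this, Real.sInf_empty]
    have h2 : marcK f t = ⊤ := by
      unfold marcK
      rw [setLIntegral_congr_fun (g := fun _ => ENNReal.ofReal t) measurableSet_Ioi]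
      · simp [ht]
      · intro l hl
        simp only
        rw [hinf l hl]
        simp
    simp [h1, h2]
  · push Not at hinf
    obtain ⟨l0, hl0, hl0'⟩ := hinf
    have hne : ∀ s : ℝ, 0 < s → ∃ m : ℝ, 0 < m ∧ μ₀ {x | m < |f x|} ≤ ENNReal.ofReal s := by
      intro s hs
      obtain ⟨m, hm, hm'⟩ := exists_level_s10 hf hl0' (ENNReal.ofReal_pos.2 hs) 1
      exact ⟨m, by linarith, hm'⟩
    have hanti : AntitoneOn (rear μ₀ f) (Ioo 0 t) := by
      intro a ha b hb hab
      apply csInf_le_csInf ⟨0, fun y hy => hy.1.le⟩ (hne a ha.1)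
      rintro y ⟨hy, hy'⟩
      exact ⟨hy, hy'.trans (ENNReal.ofReal_le_ofReal hab)⟩
    have hmeas := aemeasurable_restrict_of_antitoneOn (μ := volume) measurableSet_Ioo hanti
    rw [integral_eq_lintegral_of_nonneg_ae (Eventually.of_forall fun s => rear_nonneg_s10 f s)
      hmeas.aestronglyMeasurable,
      lintegral_eq_lintegral_meas_lt _ (Eventually.of_forall fun s => rear_nonneg_s10 f s) hmeas]
    congr 1
    unfold marcK
    apply setLIntegral_congr_fun measurableSet_Ioi
    intro l hl
    simp only
    rw [Measure.restrict_apply' measurableSet_Ioo]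
    have hset : {a | l < rear μ₀ f a} ∩ Ioo 0 t =
        {s | ENNReal.ofReal s < μ₀ {x | l < |f x|}} ∩ Ioo 0 t := by
      ext s
      simp only [mem_inter_iff, mem_setOf_eq]
      constructor
      · rintro ⟨h, h'⟩
        exact ⟨(rear_lt_iff f hl (hne s h'.1)).1 h, h'⟩
      · rintro ⟨h, h'⟩
        exact ⟨(rear_lt_iff f hl (hne s h'.1)).2 h, h'⟩
    rw [hset]
    generalize μ₀ {x | l < |f x|} = d
    rcases eq_or_ne d ⊤ with rfl | hd
    · simp
    · lift d to NNReal using hd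
      have : {s : ℝ | ENNReal.ofReal s < (d : ENNReal)} ∩ Ioo 0 t = Ioo 0 (min t d) := by
        ext s
        simp only [mem_inter_iff, mem_setOf_eq, mem_Ioo, lt_min_iff]
        constructor
        · rintro ⟨h, h1, h2⟩
          refine ⟨h1, h2, ?_⟩
          rw [ENNReal.ofReal_lt_coe_iff h1.le] at h
          exact h
        · rintro ⟨h1, h2, h3⟩
          refine ⟨?_, h1, h2⟩
          rw [ENNReal.ofReal_lt_coe_iff h1.le]
          exact h3
      rw [this, Real.volume_Ioo, sub_zero, ENNReal.ofReal_min]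
      simp

theorem marcK_mono {f g : ℝ → ℝ} (h : ∀ᵐ x ∂μ₀, |f x| ≤ |g x|) (t : ℝ) :
    marcK f t ≤ marcK g t := by
  apply lintegral_mono
  intro l
  apply min_le_min le_rfl
  apply measure_mono_ae
  filter_upwards [h] with x hx hx'
  exact lt_of_lt_of_le hx' hx

theorem lint_le_marcK {f : ℝ → ℝ} (hf : AEMeasurable f μ₀) {A : Set ℝ} (hA : MeasurableSet A)
    {t : ℝ} (ht : μ₀ A ≤ ENNReal.ofReal t) :
    ∫⁻ x in A, ENNReal.ofReal |f x| ∂μ₀ ≤ marcK f t := by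
  rw [lintegral_eq_lintegral_meas_lt _ (Eventually.of_forall fun s => abs_nonneg _)
    hf.abs.restrict]
  apply lintegral_mono
  intro l
  simp only [le_min_iff]
  rw [Measure.restrict_apply' hA]
  exact ⟨(measure_mono inter_subset_right).trans ht, measure_mono inter_subset_left⟩

theorem lint_scale (F : ℝ → ENNReal) {c : ℝ} (hc : 0 < c) :
    ∫⁻ l in Ioi (0 : ℝ), F (c⁻¹ * l) = ENNReal.ofReal c * ∫⁻ l in Ioi (0 : ℝ), F l := by
  have hc' : c⁻¹ ≠ 0 := (inv_pos.2 hc).ne'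
  have e := (Homeomorph.mulLeft₀ c⁻¹ hc').measurableEmbedding
  rw [← lintegral_indicator measurableSet_Ioi, ← lintegral_indicator measurableSet_Ioi,
    ← lintegral_const_mul' _ _ ENNReal.ofReal_ne_top]
  have h1 : ∫⁻ l, (Ioi (0 : ℝ)).indicator F l ∂(Measure.map (c⁻¹ * ·) volume) =
      ∫⁻ l, (Ioi (0 : ℝ)).indicator F (c⁻¹ * l) := e.lintegral_map _
  rw [Real.map_volume_mul_left hc', lintegral_smul_measure, inv_inv, abs_of_pos hc, smul_eq_mul,
    ← lintegral_const_mul' _ _ ENNReal.ofReal_ne_top] at h1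
  rw [h1]
  apply lintegral_congr
  intro l
  simp only [indicator, mem_Ioi]
  have : 0 < c⁻¹ * l ↔ 0 < l := by
    constructor
    · intro h
      exact (pos_iff_pos_of_mul_pos h).1 (inv_pos.2 hc)
    · intro h
      exact mul_pos (inv_pos.2 hc) h
  simp only [this]

theorem marcK_smul (f : ℝ → ℝ) {c : ℝ} (hc : 0 < c) (t : ℝ) :
    marcK (fun x => c * f x) t = ENNReal.ofReal c * marcK f t := by
  unfold marcK
  rw [← lint_scale (fun l => min (ENNReal.ofReal t) (μ₀ {x | l < |f x|})) hc]
  apply lintegral_congr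
  intro l
  congr 3
  ext x
  simp only [abs_mul, abs_of_pos hc]
  rw [inv_mul_lt_iff₀ hc]

theorem marcK_meas (f : ℝ → ℝ) (t : ℝ) :
    Measurable fun l : ℝ => min (ENNReal.ofReal t) (μ₀ {x | l < |f x|}) := by
  apply Antitone.measurable
  intro a b hab
  exact min_le_min le_rfl (measure_mono fun x hx => lt_of_le_of_lt hab hx)

theorem marcK_add (f g : ℝ → ℝ) (t : ℝ) :
    marcK (fun x => f x + g x) t ≤ 2 * (marcK f t + marcK g t) := by
  have h2 : (0 : ℝ) < 2 := by norm_num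
  unfold marcK
  rw [← lintegral_add_left (marcK_meas f t)]
  have := lint_scale (fun l => min (ENNReal.ofReal t) (μ₀ {x | l < |f x|}) +
    min (ENNReal.ofReal t) (μ₀ {x | l < |g x|})) h2
  rw [show ENNReal.ofReal 2 = 2 by simp] at this
  rw [← this]
  apply lintegral_mono
  intro l
  simp only
  have hsub : μ₀ {x | l < |f x + g x|} ≤ μ₀ {x | 2⁻¹ * l < |f x|} + μ₀ {x | 2⁻¹ * l < |g x|} := by
    refine (measure_mono ?_).trans (measure_union_le _ _)
    intro x hx
    simp only [mem_setOf_eq, mem_union] at hx ⊢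
    by_contra hc
    push Not at hc
    have := abs_add_le (f x) (g x)
    linarith [hc.1, hc.2]
  refine (min_le_min le_rfl hsub).trans ?_
  rcases le_total (ENNReal.ofReal t) (μ₀ {x | 2⁻¹ * l < |f x|}) with h | h
  · rw [min_eq_left h]
    exact (min_le_left _ _).trans le_self_add
  · rw [min_eq_right h]
    rcases le_total (ENNReal.ofReal t) (μ₀ {x | 2⁻¹ * l < |g x|}) with h' | h'
    · rw [min_eq_left h']
      exact (min_le_left _ _).trans le_add_self
    · rw [min_eq_right h']
      exact min_le_right _ _

theorem marcK_sup (v : ℕ → ℝ → ℝ) (u : ℝ → ℝ) (t : ℝ)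
    (h : ∀ x l, l < |u x| → 0 < l → ∃ k, l < |v k x|) :
    marcK u t ≤ ∑' k, marcK (v k) t := by
  unfold marcK
  rw [← lintegral_tsum fun k => (marcK_meas (v k) t).aemeasurable]
  apply setLIntegral_mono' measurableSet_Ioi
  intro l hl
  by_cases hk : ∃ k, ENNReal.ofReal t ≤ μ₀ {x | l < |v k x|}
  · obtain ⟨k, hk⟩ := hk
    refine (min_le_left _ _).trans ?_
    refine le_trans ?_ (ENNReal.le_tsum k)
    rw [min_eq_left hk]
  · push Not at hk
    refine (min_le_right _ _).trans ?_
    have : ∀ k, min (ENNReal.ofReal t) (μ₀ {x | l < |v k x|}) = μ₀ {x | l < |v k x|} :=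
      fun k => min_eq_right (hk k).le
    simp only [this]
    refine le_trans (measure_mono ?_) (measure_iUnion_le _)
    intro x hx
    exact mem_iUnion.2 (h x l hx hl)

theorem marcK_le_max (f : ℝ → ℝ) {t r : ℝ} (hr : 0 < r) (ht : 0 < t) :
    marcK f t ≤ ENNReal.ofReal (max 1 (t / r)) * marcK f r := by
  unfold marcK
  rw [← lintegral_const_mul' _ _ ENNReal.ofReal_ne_top]
  apply lintegral_mono
  intro l
  simp only
  rcases le_total (ENNReal.ofReal r) (μ₀ {x | l < |f x|}) with h | h
  · rw [min_eq_left h, ← ENNReal.ofReal_mul (by positivity)]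
    refine (min_le_left _ _).trans (ENNReal.ofReal_le_ofReal ?_)
    calc t = t / r * r := by field_simp
      _ ≤ _ := by gcongr; exact le_max_right _ _
  · rw [min_eq_right h]
    refine (min_le_right _ _).trans ?_
    refine le_trans (one_mul _).symm.le ?_
    gcongr
    simp

theorem marcK_ne_top {f : ℝ → ℝ} {t r : ℝ} (hr : 0 < r) (ht : 0 < t) (h : marcK f r ≠ ⊤) :
    marcK f t ≠ ⊤ :=
  ne_top_of_le_ne_top (ENNReal.mul_ne_top ENNReal.ofReal_ne_top h) (marcK_le_max f hr ht)

theorem marcK_le_bdd {f : ℝ → ℝ} {L : ℝ} (hL : ∀ x, |f x| ≤ L) (hL0 : 0 ≤ L) {A : Set ℝ}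
    (hA : ∀ x, f x ≠ 0 → x ∈ A) (t : ℝ) :
    marcK f t ≤ ENNReal.ofReal L * min (ENNReal.ofReal t) (μ₀ A) := by
  have : marcK f t ≤ ∫⁻ l in Ioc 0 L, min (ENNReal.ofReal t) (μ₀ A) := by
    unfold marcK
    rw [← lintegral_indicator measurableSet_Ioi, ← lintegral_indicator measurableSet_Ioc]
    apply lintegral_mono
    intro l
    simp only [indicator, mem_Ioi, mem_Ioc]
    by_cases hl : 0 < l
    · by_cases hl' : l ≤ L
      · simp only [hl, hl', and_self, if_true]
        apply min_le_min le_rfl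
        apply measure_mono
        intro x hx
        apply hA
        intro h0
        simp only [mem_setOf_eq, h0, abs_zero] at hx
        linarith
      · have : {x | l < |f x|} = ∅ := by
          ext x
          simp only [mem_setOf_eq, mem_empty_iff_false, iff_false, not_lt]
          exact (hL x).trans (not_le.1 hl').le
        simp [hl, hl', this]
    · simp [hl]
  refine this.trans ?_
  rw [lintegral_const, Measure.restrict_apply_univ, Real.volume_Ioc, sub_zero, mul_comm]

theorem marcMem_of_le {phi f : ℝ → ℝ} (hpos : ∀ t, 0 < t → 0 < phi t)
    (hf : AEMeasurable f μ₀) {C : ℝ} (hC : 0 ≤ C)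
    (h : ∀ t, 0 < t → marcK f t ≤ ENNReal.ofReal (C * (t / phi t))) :
    marcMem phi f ∧ marcNorm phi f ≤ C := by
  have key : ∀ t : {t : ℝ // 0 < t}, marcFun phi f t.1 ≤ C := by
    rintro ⟨t, ht⟩
    have hp := hpos t ht
    rw [marcFun_eq phi hf ht]
    have h1 : (marcK f t).toReal ≤ C * (t / phi t) := by
      apply ENNReal.toReal_le_of_le_ofReal (by positivity) (h t ht)
    calc phi t / t * (marcK f t).toReal ≤ phi t / t * (C * (t / phi t)) := by gcongr
      _ = C := by field_simp
  haveI : Nonempty {t : ℝ // 0 < t} := ⟨⟨1, one_pos⟩⟩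
  exact ⟨⟨hf, ⟨C, by rintro _ ⟨t, rfl⟩; exact key t⟩⟩, ciSup_le key⟩

theorem le_marcNorm {phi f : ℝ → ℝ} (hf : marcMem phi f) {t : ℝ} (ht : 0 < t) :
    phi t / t * (marcK f t).toReal ≤ marcNorm phi f := by
  rw [← marcFun_eq phi hf.1 ht]
  exact le_ciSup hf.2 (⟨t, ht⟩ : {t : ℝ // 0 < t})

theorem marcK_le_of_mem {phi f : ℝ → ℝ} (hpos : ∀ t, 0 < t → 0 < phi t) (hf : marcMem phi f)
    {t : ℝ} (ht : 0 < t) (hfin : marcK f t ≠ ⊤) :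
    marcK f t ≤ ENNReal.ofReal (marcNorm phi f * (t / phi t)) := by
  rw [← ENNReal.ofReal_toReal hfin]
  apply ENNReal.ofReal_le_ofReal
  have hp := hpos t ht
  calc (marcK f t).toReal = (phi t / t * (marcK f t).toReal) * (t / phi t) := by field_simp
    _ ≤ _ := by gcongr; exact le_marcNorm hf ht

theorem marcNorm_nonneg {phi f : ℝ → ℝ} (hpos : ∀ t, 0 < t → 0 < phi t) :
    0 ≤ marcNorm phi f := by
  apply Real.iSup_nonneg
  rintro ⟨t, ht⟩
  unfold marcFun
  have := hpos t ht
  have : 0 ≤ ∫ s in Set.Ioo (0 : ℝ) t, rear μ₀ f s := integral_nonneg fun s => rear_nonneg_s10 f s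
  positivity

theorem exists_chain (R : ℕ → ℝ → ℝ → Prop)
    (h : ∀ k, ∀ᶠ a in 𝓝[>] (0 : ℝ), ∀ᶠ b in 𝓝[>] (0 : ℝ), R k a b) :
    ∃ t : ℕ → ℝ, (∀ k, 0 < t k) ∧ ∀ k, R k (t k) (t (k + 1)) := by
  have hpos : ∀ᶠ a in 𝓝[>] (0 : ℝ), 0 < a := eventually_mem_nhdsWithin
  have step : ∀ k (p : {a : ℝ // 0 < a ∧ ∀ᶠ b in 𝓝[>] (0 : ℝ), R k a b}),
      ∃ q : {a : ℝ // 0 < a ∧ ∀ᶠ b in 𝓝[>] (0 : ℝ), R (k + 1) a b}, R k p.1 q.1 := by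
    rintro k ⟨a, ha, ha'⟩
    obtain ⟨b, ⟨h1, h2⟩, h3⟩ := ((ha'.and hpos).and (h (k + 1))).exists
    exact ⟨⟨b, h2, h3⟩, h1⟩
  choose nxt hnxt using step
  obtain ⟨a, ha, ha'⟩ := (hpos.and (h 0)).exists
  let F : ∀ k, {a : ℝ // 0 < a ∧ ∀ᶠ b in 𝓝[>] (0 : ℝ), R k a b} :=
    fun k => Nat.rec ⟨a, ha, ha'⟩ (fun n p => nxt n p) k
  exact ⟨fun k => (F k).1, fun k => (F k).2.1, fun k => hnxt k (F k)⟩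

theorem psi_mono {phi : ℝ → ℝ} (hpos : ∀ t, 0 < t → 0 < phi t)
    (hquasi : AntitoneOn (fun t => phi t / t) (Set.Ioi (0 : ℝ))) {s t : ℝ} (hs : 0 < s)
    (hst : s ≤ t) : s / phi s ≤ t / phi t := by
  have ht := hs.trans_le hst
  have h := hquasi (mem_Ioi.2 hs) (mem_Ioi.2 ht) hst
  simp only at h
  rw [div_le_div_iff₀ ht hs] at h
  rw [div_le_div_iff₀ (hpos s hs) (hpos t ht)]
  linarith

theorem ring_ineq (phi : ℝ → ℝ)
    (hpos : ∀ t, 0 < t → 0 < phi t)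
    (hmono : MonotoneOn phi (Set.Ioi (0 : ℝ)))
    (hquasi : AntitoneOn (fun t => phi t / t) (Set.Ioi (0 : ℝ)))
    (hlim : Tendsto (fun t => t / phi t) (𝓝[>] (0 : ℝ)) (𝓝 0))
    {c d : ℝ} (hc0 : 0 < c) (hc : c < 1) (hd0 : 0 < d) (hd : d < 1) :
    ∀ᶠ a in 𝓝[>] (0 : ℝ), ∀ᶠ b in 𝓝[>] (0 : ℝ), ∀ t, b < t → t ≤ a → ∀ S : ℝ,
      S ≤ d * (b / phi b) → S + (t - b) * (c / phi a) ≤ t / phi t := by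
  have hposE : ∀ᶠ a in 𝓝[>] (0 : ℝ), 0 < a := eventually_mem_nhdsWithin
  by_cases hz : ∀ e : ℝ, 0 < e → ∃ s, 0 < s ∧ phi s < e
  · filter_upwards [hposE] with a ha
    have hpa := hpos a ha
    obtain ⟨s, hs, hs'⟩ := hz ((1 - d) * phi a) (mul_pos (by linarith) hpa)
    have hps := hpos s hs
    have hev := hlim.eventually (gt_mem_nhds (show (0 : ℝ) < (1 - c) * (s / phi s) from
      mul_pos (by linarith) (by positivity)))
    filter_upwards [hposE, hev] with b hb hb' t hbt hta S hS
    have ht : 0 < t := hb.trans hbt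
    have hpt := hpos t ht
    have hpb := hpos b hb
    rcases le_total s t with hst | hst
    · have h1 : S ≤ (1 - c) * (s / phi s) := by
        have : 0 < b / phi b := by positivity
        nlinarith
      have h2 : (t - b) * (c / phi a) ≤ c * (t / phi t) := by
        have : c / phi a ≤ c / phi t := by
          apply div_le_div_of_nonneg_left hc0.le hpt (hmono ht ha hta)
        calc (t - b) * (c / phi a) ≤ t * (c / phi t) := by
              apply mul_le_mul (by linarith) this (by positivity) ht.le
          _ = _ := by ring
      have h3 := psi_mono hpos hquasi hs hst
      nlinarith
    · have h1 : b / phi b ≤ t / phi t := psi_mono hpos hquasi hb hbt.le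
      have h2 : (t - b) * (c / phi a) ≤ (1 - d) * (t / phi t) := by
        have h3 : phi t ≤ (1 - d) * phi a := (hmono ht hs hst).trans hs'.le
        have h4 : c / phi a ≤ (1 - d) / phi t := by
          rw [div_le_div_iff₀ hpa hpt]
          nlinarith
        calc (t - b) * (c / phi a) ≤ t * ((1 - d) / phi t) := by
              apply mul_le_mul (by linarith) h4 (by positivity) ht.le
          _ = _ := by ring
      nlinarith
  · push Not at hz
    obtain ⟨e, he, hz⟩ := hz
    set A := sInf (phi '' Ioi 0) with hA
    have hAle : ∀ s, 0 < s → A ≤ phi s := fun s hs =>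
      csInf_le ⟨e, by rintro _ ⟨y, hy, rfl⟩; exact hz y hy⟩ ⟨s, hs, rfl⟩
    have hA0 : 0 < A := he.trans_le (le_csInf ⟨phi 1, 1, by simp, rfl⟩
      (by rintro _ ⟨y, hy, rfl⟩; exact hz y hy))
    have hlt : A < A / d := by
      rw [lt_div_iff₀ hd0]
      nlinarith
    obtain ⟨_, ⟨s, hs, rfl⟩, hs'⟩ := exists_lt_of_csInf_lt
      (show (phi '' Ioi 0).Nonempty from ⟨phi 1, 1, by simp, rfl⟩) hlt
    have hs : 0 < s := hs
    have : Ioo 0 s ∈ 𝓝[>] (0 : ℝ) := Ioo_mem_nhdsGT hs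
    filter_upwards [this] with a ha
    filter_upwards [hposE] with b hb t hbt hta S hS
    have ht : 0 < t := hb.trans hbt
    have hpt := hpos t ht
    have hpb := hpos b hb
    have hpa := hpos a ha.1
    have h1 : d * phi t ≤ A := by
      have : phi t ≤ phi s := hmono ht hs (hta.trans ha.2.le)
      rw [lt_div_iff₀ hd0] at hs'
      nlinarith
    have h2 : S ≤ b / phi t := by
      refine hS.trans ?_
      rw [le_div_iff₀ hpt]
      have h5 : d * phi t ≤ phi b := h1.trans (hAle b hb)
      calc d * (b / phi b) * phi t = (d * phi t) * b / phi b := by ring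
        _ ≤ phi b * b / phi b := by gcongr
        _ = b := by field_simp
    have h3 : (t - b) * (c / phi a) ≤ (t - b) * (1 / phi t) := by
      apply mul_le_mul_of_nonneg_left _ (by linarith)
      exact div_le_div₀ zero_le_one hc.le hpt (hmono ht ha.1 hta)
    calc S + (t - b) * (c / phi a) ≤ b / phi t + (t - b) * (1 / phi t) := add_le_add h2 h3
      _ = t / phi t := by ring

theorem marcK_le_anti {g : ℝ → ℝ} (hg0 : ∀ s, 0 ≤ g s) (hg : AntitoneOn g (Ioi 0)) {t : ℝ}
    (ht : 0 < t) : marcK g t ≤ ∫⁻ s in Ioo 0 t, ENNReal.ofReal (g s) := by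
  have hm : AEMeasurable g (volume.restrict (Ioo 0 t)) :=
    aemeasurable_restrict_of_antitoneOn measurableSet_Ioo (hg.mono Ioo_subset_Ioi_self)
  rw [lintegral_eq_lintegral_meas_lt _ (Eventually.of_forall fun s => hg0 s) hm]
  apply lintegral_mono
  intro l
  simp only
  rw [Measure.restrict_apply' measurableSet_Ioo, Measure.restrict_apply' measurableSet_Ioi]
  by_cases hx : ∃ x, t ≤ x ∧ l < g x
  · obtain ⟨x, hx, hx'⟩ := hx
    have : {a | l < g a} ∩ Ioo 0 t = Ioo 0 t := by
      apply inter_eq_right.2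
      intro s hs
      have := hg (mem_Ioi.2 hs.1) (mem_Ioi.2 (ht.trans_le hx)) (hs.2.le.trans hx)
      exact hx'.trans_le this
    rw [this, Real.volume_Ioo, sub_zero]
    exact min_le_left _ _
  · push Not at hx
    refine (min_le_right _ _).trans (measure_mono ?_)
    rintro s ⟨hs, hs0⟩
    have hs : l < g s := by
      have := hs
      simp only [mem_setOf_eq, abs_of_nonneg (hg0 s)] at this
      exact this
    refine ⟨hs, hs0, ?_⟩
    by_contra hc
    exact absurd hs (not_lt.2 (hx s (not_lt.1 hc)))

theorem exists_profile (phi : ℝ → ℝ)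
    (hpos : ∀ t, 0 < t → 0 < phi t)
    (hmono : MonotoneOn phi (Set.Ioi (0 : ℝ)))
    (hquasi : AntitoneOn (fun t => phi t / t) (Set.Ioi (0 : ℝ)))
    (hlim : Tendsto (fun t => t / phi t) (𝓝[>] (0 : ℝ)) (𝓝 0)) :
    ∃ (t : ℕ → ℝ) (idx : ℝ → ℕ) (g : ℝ → ℝ), (∀ k, 0 < t k) ∧
      (∀ k : ℕ, t (k + 1) ≤ t k * (1 / ((k : ℝ) + 2))) ∧ (∀ s, 0 ≤ g s) ∧
      (∀ k : ℕ, ∀ s ∈ Ioc (t (k + 1)) (t k), idx s = k ∧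
        g s = (1 - 1 / ((k : ℝ) + 2)) / phi (t k)) ∧
      AEMeasurable idx μ₀ ∧ AEMeasurable g μ₀ ∧
      ∀ s, 0 < s → marcK g s ≤ ENNReal.ofReal (s / phi s) := by
  have hposE : ∀ᶠ a in 𝓝[>] (0 : ℝ), 0 < a := eventually_mem_nhdsWithin
  set c : ℕ → ℝ := fun k => 1 - 1 / ((k : ℝ) + 2) with hcdef
  set d : ℕ → ℝ := fun k => 1 - 1 / (2 * ((k : ℝ) + 2)) with hddef
  have hinv : ∀ k : ℕ, 0 < 1 / ((k : ℝ) + 2) ∧ 1 / ((k : ℝ) + 2) ≤ 1 / 2 := by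
    intro k
    refine ⟨by positivity, one_div_le_one_div_of_le (by norm_num) ?_⟩
    have : (0 : ℝ) ≤ k := Nat.cast_nonneg k
    linarith
  have hd2 : ∀ k, d k = 1 - (1 / ((k : ℝ) + 2)) / 2 := by
    intro k
    simp only [hddef]
    field_simp
  have hc0 : ∀ k, 0 < c k := fun k => by have := hinv k; simp only [hcdef]; linarith
  have hc1 : ∀ k, c k < 1 := fun k => by have := hinv k; simp only [hcdef]; linarith
  have hd0 : ∀ k, 0 < d k := fun k => by have := hinv k; rw [hd2]; linarith
  have hd1 : ∀ k, d k < 1 := fun k => by have := hinv k; rw [hd2]; linarith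
  have hcd : ∀ k, 0 < d k - c k := fun k => by
    have := hinv k; rw [hd2]; simp only [hcdef]; linarith
  obtain ⟨t, ht0, hR⟩ := exists_chain (fun k a b =>
    b ≤ a * (1 / ((k : ℝ) + 2)) ∧ b / phi b ≤ (1 / 2) * (a / phi a) ∧
    b / phi b ≤ ((d k - c k) / 2) * (a / phi a) ∧
    ∀ t, b < t → t ≤ a → ∀ S : ℝ,
      S ≤ d (k + 1) * (b / phi b) → S + (t - b) * (c k / phi a) ≤ t / phi t) (by
    intro k
    filter_upwards [hposE, ring_ineq phi hpos hmono hquasi hlim (hc0 k) (hc1 k) (hd0 (k + 1))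
      (hd1 (k + 1))] with a ha hra
    have hpa := hpos a ha
    have e1 : ∀ᶠ b in 𝓝[>] (0 : ℝ), b < a * (1 / ((k : ℝ) + 2)) :=
      mem_of_superset (Ioo_mem_nhdsGT (show (0 : ℝ) < a * (1 / ((k : ℝ) + 2)) by positivity))
        fun b hb => hb.2
    have e2 := hlim.eventually (gt_mem_nhds (show (0 : ℝ) < (1 / 2) * (a / phi a) by positivity))
    have e3 := hlim.eventually (gt_mem_nhds (show (0 : ℝ) < ((d k - c k) / 2) * (a / phi a) from
      mul_pos (half_pos (hcd k)) (by positivity)))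
    filter_upwards [hra, e1, e2, e3] with b h1 h2 h3 h4
    exact ⟨h2.le, h3.le, h4.le, h1⟩)
  have hstep : ∀ k, t (k + 1) < t k := fun k => by
    have := hinv k
    have h1 := (hR k).1
    nlinarith [ht0 k]
  have hanti : StrictAnti t := strictAnti_nat_of_succ_lt hstep
  have hhalf : ∀ k, t (k + 1) ≤ t k * (1 / 2) := fun k => by
    have := hinv k
    have h1 := (hR k).1
    nlinarith [ht0 k]
  have hpow : ∀ k, t k ≤ t 0 * (1 / 2) ^ k := by
    intro k
    induction k with
    | zero => simp
    | succ k ih =>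
      rw [pow_succ]
      have := hhalf k
      nlinarith
  have hex : ∀ s, 0 < s → ∃ k, t (k + 1) < s := by
    intro s hs
    obtain ⟨n, hn⟩ := exists_pow_lt_of_lt_one (show 0 < s / t 0 from div_pos hs (ht0 0))
      (show (1 / 2 : ℝ) < 1 by norm_num)
    refine ⟨n, (hstep n).trans_le ((hpow n).trans ?_)⟩
    rw [lt_div_iff₀ (ht0 0)] at hn
    linarith
  set idx : ℝ → ℕ := fun s => sInf {k | t (k + 1) < s} with hidx
  have hidx_ring : ∀ k, ∀ s ∈ Ioc (t (k + 1)) (t k), idx s = k := by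
    intro k s hs
    apply le_antisymm
    · exact Nat.sInf_le hs.1
    · apply le_csInf ⟨k, hs.1⟩
      intro j hj
      have hj : t (j + 1) < s := hj
      by_contra hc
      push Not at hc
      have : t k ≤ t (j + 1) := hanti.antitone hc
      linarith [hs.2]
  have hring : ∀ s, 0 < s → s ≤ t 0 → ∃ k, s ∈ Ioc (t (k + 1)) (t k) := by
    intro s hs hs0
    refine ⟨idx s, Nat.sInf_mem (hex s hs), ?_⟩
    rcases Nat.eq_zero_or_pos (idx s) with h | h
    · rw [h]; exact hs0
    · have hlt : idx s - 1 < sInf {k | t (k + 1) < s} := by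
        change idx s - 1 < idx s
        omega
      have := Nat.notMem_of_lt_sInf hlt
      simp only [mem_setOf_eq, not_lt] at this
      rwa [Nat.sub_add_cancel h] at this
  set g : ℝ → ℝ := fun s => if 0 < s ∧ s ≤ t 0 then c (idx s) / phi (t (idx s)) else 0 with hg
  have hg0 : ∀ s, 0 ≤ g s := by
    intro s
    simp only [hg]
    split_ifs
    · exact div_nonneg (hc0 _).le (hpos _ (ht0 _)).le
    · exact le_rfl
  have hgring : ∀ k, ∀ s ∈ Ioc (t (k + 1)) (t k), g s = c k / phi (t k) := by
    intro k s hs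
    have h1 : 0 < s ∧ s ≤ t 0 :=
      ⟨(ht0 _).trans hs.1, hs.2.trans (hanti.antitone (Nat.zero_le k))⟩
    simp only [hg, h1, and_self, if_true]
    rw [hidx_ring k s hs]
  have hidx_anti : AntitoneOn idx (Ioi 0) := by
    intro a ha b hb hab
    apply Nat.sInf_le
    exact (show t (idx a + 1) < a from Nat.sInf_mem (hex a ha)).trans_le hab
  have hcmono : ∀ i j : ℕ, i ≤ j → c i / phi (t i) ≤ c j / phi (t j) := by
    intro i j hij
    apply div_le_div₀ (hc0 j).le _ (hpos _ (ht0 j)) (hmono (ht0 j) (ht0 i) (hanti.antitone hij))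
    simp only [hcdef]
    have : (i : ℝ) ≤ j := by exact_mod_cast hij
    have : 1 / ((j : ℝ) + 2) ≤ 1 / ((i : ℝ) + 2) :=
      one_div_le_one_div_of_le (by positivity) (by linarith)
    linarith
  have hg_anti : AntitoneOn g (Ioi 0) := by
    intro a ha b hb hab
    by_cases hb0 : b ≤ t 0
    · simp only [hg]
      rw [if_pos ⟨hb, hb0⟩, if_pos ⟨ha, hab.trans hb0⟩]
      exact hcmono _ _ (hidx_anti ha hb hab)
    · have : g b = 0 := by simp [hg, hb0]
      rw [this]
      exact hg0 a
  -- tail integrals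
  have hringint : ∀ k : ℕ, ∀ a, a ≤ t k → ∫⁻ s in Ioc (t (k + 1)) a, ENNReal.ofReal (g s) =
      ENNReal.ofReal ((a - t (k + 1)) * (c k / phi (t k))) := by
    intro k a ha
    rw [setLIntegral_congr_fun (g := fun _ => ENNReal.ofReal (c k / phi (t k))) measurableSet_Ioc]
    · rw [lintegral_const, Measure.restrict_apply_univ, Real.volume_Ioc, mul_comm,
        ENNReal.ofReal_mul' (div_nonneg (hc0 _).le (hpos _ (ht0 _)).le)]
    · intro s hs
      simp only
      rw [hgring k s ⟨hs.1, hs.2.trans ha⟩]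
  have hringint' : ∀ k : ℕ, ∫⁻ s in Ioc (t (k + 1)) (t k), ENNReal.ofReal (g s) ≤
      ENNReal.ofReal (c k * (t k / phi (t k))) := by
    intro k
    rw [hringint k _ le_rfl]
    apply ENNReal.ofReal_le_ofReal
    have := div_nonneg (hc0 k).le (hpos _ (ht0 k)).le
    calc (t k - t (k + 1)) * (c k / phi (t k)) ≤ t k * (c k / phi (t k)) := by
          apply mul_le_mul_of_nonneg_right _ this
          linarith [ht0 (k + 1)]
      _ = _ := by ring
  have hpsi0 : ∀ k, 0 < t k / phi (t k) := fun k => div_pos (ht0 k) (hpos _ (ht0 k))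
  have hgeo : ∀ m j, t (m + j) / phi (t (m + j)) ≤ (t m / phi (t m)) * (1 / 2) ^ j := by
    intro m j
    induction j with
    | zero => simp
    | succ j ih =>
      rw [pow_succ, ← add_assoc]
      have := (hR (m + j)).2.1
      nlinarith
  have htail2 : ∀ m, ∫⁻ s in Ioc 0 (t m), ENNReal.ofReal (g s) ≤
      ENNReal.ofReal (2 * (t m / phi (t m))) := by
    intro m
    have hsub : Ioc 0 (t m) ⊆ ⋃ j : ℕ, Ioc (t (m + j + 1)) (t (m + j)) := by
      intro s hs
      obtain ⟨k, hk⟩ := hring s hs.1 (hs.2.trans (hanti.antitone (Nat.zero_le m)))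
      have hmk : m ≤ k := by
        by_contra hc
        push Not at hc
        have : t m ≤ t (k + 1) := hanti.antitone hc
        linarith [hk.1, hs.2]
      refine mem_iUnion.2 ⟨k - m, ?_⟩
      rwa [Nat.add_sub_cancel' hmk]
    calc ∫⁻ s in Ioc 0 (t m), ENNReal.ofReal (g s)
        ≤ ∫⁻ s in ⋃ j : ℕ, Ioc (t (m + j + 1)) (t (m + j)), ENNReal.ofReal (g s) :=
          lintegral_mono_set hsub
      _ ≤ ∑' j : ℕ, ∫⁻ s in Ioc (t (m + j + 1)) (t (m + j)), ENNReal.ofReal (g s) :=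
          lintegral_iUnion_le _ _
      _ ≤ ∑' j : ℕ, ENNReal.ofReal ((t m / phi (t m)) * (1 / 2) ^ j) := by
          apply ENNReal.tsum_le_tsum
          intro j
          refine (hringint' (m + j)).trans (ENNReal.ofReal_le_ofReal ?_)
          refine le_trans ?_ (hgeo m j)
          have := hpsi0 (m + j)
          have := hc1 (m + j)
          nlinarith
      _ = ENNReal.ofReal (∑' j : ℕ, (t m / phi (t m)) * (1 / 2) ^ j) := by
          rw [ENNReal.ofReal_tsum_of_nonneg]
          · intro j
            have := hpsi0 m
            positivity
          · exact summable_geometric_two.mul_left _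
      _ = _ := by rw [tsum_mul_left, tsum_geometric_two, mul_comm]
  have htail : ∀ m, ∫⁻ s in Ioc 0 (t m), ENNReal.ofReal (g s) ≤
      ENNReal.ofReal (d m * (t m / phi (t m))) := by
    intro m
    have hsub : Ioc 0 (t m) ⊆ Ioc 0 (t (m + 1)) ∪ Ioc (t (m + 1)) (t m) := by
      intro s hs
      rcases le_or_gt s (t (m + 1)) with h | h
      · exact Or.inl ⟨hs.1, h⟩
      · exact Or.inr ⟨h, hs.2⟩
    refine (lintegral_mono_set hsub).trans ((lintegral_union_le _ _ _).trans ?_)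
    refine (add_le_add (htail2 (m + 1)) (hringint' m)).trans ?_
    rw [← ENNReal.ofReal_add (mul_nonneg zero_le_two (hpsi0 _).le)
      (mul_nonneg (hc0 m).le (hpsi0 _).le)]
    apply ENNReal.ofReal_le_ofReal
    have := (hR m).2.2.1
    nlinarith
  refine ⟨t, idx, g, ht0, fun k => (hR k).1, hg0, fun k s hs => ⟨hidx_ring k s hs, hgring k s hs⟩,
    aemeasurable_restrict_of_antitoneOn measurableSet_Ioi hidx_anti,
    aemeasurable_restrict_of_antitoneOn measurableSet_Ioi hg_anti, ?_⟩
  intro s hs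
  refine (marcK_le_anti hg0 hg_anti hs).trans ?_
  rcases le_or_gt s (t 0) with hs0 | hs0
  · obtain ⟨k, hk⟩ := hring s hs hs0
    have hsub : Ioo 0 s ⊆ Ioc 0 (t (k + 1)) ∪ Ioc (t (k + 1)) s := by
      intro y hy
      rcases le_or_gt y (t (k + 1)) with h | h
      · exact Or.inl ⟨hy.1, h⟩
      · exact Or.inr ⟨h, hy.2.le⟩
    refine (lintegral_mono_set hsub).trans ((lintegral_union_le _ _ _).trans ?_)
    rw [hringint k s hk.2]
    refine (add_le_add (htail (k + 1)) le_rfl).trans ?_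
    rw [← ENNReal.ofReal_add (mul_nonneg (hd0 _).le (hpsi0 _).le)
      (mul_nonneg (by linarith [hk.1]) (div_nonneg (hc0 _).le (hpos _ (ht0 _)).le))]
    exact ENNReal.ofReal_le_ofReal ((hR k).2.2.2 s hk.1 hk.2 _ le_rfl)
  · have hsub : Ioo 0 s ⊆ Ioc 0 (t 0) ∪ Ioc (t 0) s := by
      intro y hy
      rcases le_or_gt y (t 0) with h | h
      · exact Or.inl ⟨hy.1, h⟩
      · exact Or.inr ⟨h, hy.2.le⟩
    refine (lintegral_mono_set hsub).trans ((lintegral_union_le _ _ _).trans ?_)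
    have h0 : ∫⁻ y in Ioc (t 0) s, ENNReal.ofReal (g y) = 0 := by
      rw [setLIntegral_congr_fun (g := fun _ => 0) measurableSet_Ioc]
      · simp
      · intro y hy
        have : ¬ y ≤ t 0 := not_le.2 hy.1
        simp [hg, this]
    rw [h0, add_zero]
    refine (htail 0).trans (ENNReal.ofReal_le_ofReal ?_)
    have h1 := psi_mono hpos hquasi (ht0 0) hs0.le
    have h2 := hpsi0 0
    have h3 := hd1 0
    nlinarith

theorem hump_set {h : ℝ → ℝ} (hm : Measurable h) (hK : marcK h 1 = ⊤) {δ : ℝ} (hδ : 0 < δ)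
    (M C : ℝ) : ∃ (A : Set ℝ) (L : ℝ), MeasurableSet A ∧ 0 ≤ L ∧ μ₀ A ≤ ENNReal.ofReal δ ∧
      (∀ x ∈ A, M ≤ |h x| ∧ |h x| ≤ L) ∧
      ENNReal.ofReal C ≤ ∫⁻ x in A, ENNReal.ofReal |h x| ∂μ₀ := by
  have hmeasL : ∀ m : ℝ, MeasurableSet {x | m < |h x|} := fun m =>
    measurableSet_lt measurable_const hm.abs
  have hmeasE : ∀ (m : ℝ) (n : ℕ), MeasurableSet {x | m < |h x| ∧ |h x| ≤ n} := fun m n =>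
    (hmeasL m).inter (measurableSet_le hm.abs measurable_const)
  have hmonoE : ∀ m : ℝ, Monotone fun n : ℕ => {x | m < |h x| ∧ |h x| ≤ n} := by
    intro m a b hab x hx
    have : (a : ℝ) ≤ b := by exact_mod_cast hab
    exact ⟨hx.1, hx.2.trans this⟩
  have hUE : ∀ m : ℝ, (⋃ n : ℕ, {x | m < |h x| ∧ |h x| ≤ n}) = {x | m < |h x|} := by
    intro m
    ext x
    simp only [mem_iUnion, mem_setOf_eq]
    constructor
    · rintro ⟨n, hn, _⟩
      exact hn
    · intro hx
      obtain ⟨n, hn⟩ := exists_nat_ge |h x|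
      exact ⟨n, hx, hn⟩
  by_cases hfin : ∃ l : ℝ, μ₀ {x | l < |h x|} ≠ ⊤
  · obtain ⟨l, hl⟩ := hfin
    obtain ⟨m, hmM, hmδ⟩ := exists_level_s10 hm.aemeasurable hl (ENNReal.ofReal_pos.2 hδ) (max M 0)
    have hm0 : 0 ≤ m := (le_max_right _ _).trans hmM
    have htop : ∫⁻ x in {x | m < |h x|}, ENNReal.ofReal |h x| ∂μ₀ = ⊤ := by
      rw [lintegral_eq_lintegral_meas_lt _ (Eventually.of_forall fun s => abs_nonneg _)
        hm.abs.aemeasurable]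
      have h1 : marcK h 1 ≤ ENNReal.ofReal m +
          ∫⁻ l in Ioi (0 : ℝ), ((μ₀).restrict {x | m < |h x|}) {a | l < |h a|} := by
        have hsub : Ioi (0 : ℝ) ⊆ Ioc 0 m ∪ Ioi m := by
          intro y hy
          rcases le_or_gt y m with h | h
          · exact Or.inl ⟨hy, h⟩
          · exact Or.inr h
        unfold marcK
        refine (lintegral_mono_set hsub).trans ((lintegral_union_le _ _ _).trans ?_)
        apply add_le_add
        · calc ∫⁻ l in Ioc 0 m, min (ENNReal.ofReal 1) (μ₀ {x | l < |h x|})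
              ≤ ∫⁻ l in Ioc 0 m, 1 := lintegral_mono fun l => (min_le_left _ _).trans (by simp)
            _ = ENNReal.ofReal m := by simp
        · refine le_trans ?_ (lintegral_mono_set (Ioi_subset_Ioi hm0))
          apply setLIntegral_mono' measurableSet_Ioi
          intro l hl
          refine (min_le_right _ _).trans ?_
          rw [Measure.restrict_apply' (hmeasL m)]
          apply measure_mono
          intro x hx
          exact ⟨hx, show m < |h x| from lt_trans (mem_Ioi.1 hl) hx⟩
      rw [hK] at h1
      by_contra hc
      exact absurd h1 (not_le.2 (ENNReal.add_lt_top.2 ⟨ENNReal.ofReal_lt_top, lt_top_iff_ne_top.2 hc⟩))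
    have htend := tendsto_measure_iUnion_atTop
      (μ := (μ₀).withDensity fun x => ENNReal.ofReal |h x|) (hmonoE m)
    rw [hUE m, withDensity_apply _ (hmeasL m), htop] at htend
    obtain ⟨n, hn⟩ := (htend.eventually (lt_mem_nhds (ENNReal.ofReal_lt_top (r := C)))).exists
    simp only [Function.comp] at hn
    rw [withDensity_apply _ (hmeasE m n)] at hn
    refine ⟨_, n, hmeasE m n, Nat.cast_nonneg n, (measure_mono fun x hx => hx.1).trans hmδ, ?_,
      hn.le⟩
    intro x hx
    exact ⟨((le_max_left _ _).trans hmM).trans hx.1.le, hx.2⟩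
  · push Not at hfin
    set l := max (max M 0) (2 * C / δ) with hl
    have hl0 : 0 ≤ l := (le_max_right M 0).trans (le_max_left _ _)
    have htend := tendsto_measure_iUnion_atTop (μ := μ₀) (hmonoE l)
    rw [hUE l, hfin l] at htend
    obtain ⟨n, hn⟩ := (htend.eventually (lt_mem_nhds (ENNReal.ofReal_lt_top (r := δ / 2)))).exists
    simp only [Function.comp] at hn
    set E := {x | l < |h x| ∧ |h x| ≤ n} with hE
    have hEm : MeasurableSet E := hmeasE l n
    have hBm : Monotone fun j : ℕ => E ∩ Iic ((j : ℝ) * (δ / 2)) := by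
      intro a b hab x hx
      have : (a : ℝ) ≤ b := by exact_mod_cast hab
      refine ⟨hx.1, mem_Iic.2 (le_trans (mem_Iic.1 hx.2) ?_)⟩
      gcongr
    have hBU : (⋃ j : ℕ, E ∩ Iic ((j : ℝ) * (δ / 2))) = E := by
      ext x
      simp only [mem_iUnion, mem_inter_iff, mem_Iic]
      constructor
      · rintro ⟨j, hj, _⟩
        exact hj
      · intro hx
        obtain ⟨j, hj⟩ := exists_nat_ge (x / (δ / 2))
        rw [div_le_iff₀ (by linarith)] at hj
        exact ⟨j, hx, hj⟩
    have htend2 := tendsto_measure_iUnion_atTop (μ := μ₀) hBm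
    rw [hBU] at htend2
    have hex : ∃ j : ℕ, ENNReal.ofReal (δ / 2) < μ₀ (E ∩ Iic ((j : ℝ) * (δ / 2))) :=
      (htend2.eventually (lt_mem_nhds hn)).exists
    classical
    obtain ⟨j, hj, hjmin⟩ : ∃ j : ℕ, ENNReal.ofReal (δ / 2) < μ₀ (E ∩ Iic ((j : ℝ) * (δ / 2))) ∧
        ∀ i < j, ¬ ENNReal.ofReal (δ / 2) < μ₀ (E ∩ Iic ((i : ℝ) * (δ / 2))) :=
      ⟨Nat.find hex, Nat.find_spec hex, fun i hi => Nat.find_min hex hi⟩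
    have hle : μ₀ (E ∩ Iic ((j : ℝ) * (δ / 2))) ≤ ENNReal.ofReal δ := by
      rcases j with _ | j
      · have : μ₀ (E ∩ Iic (((0 : ℕ) : ℝ) * (δ / 2))) = 0 := by
          rw [Measure.restrict_apply' measurableSet_Ioi]
          have : E ∩ Iic (((0 : ℕ) : ℝ) * (δ / 2)) ∩ Ioi 0 = ∅ := by
            ext x
            simp only [Nat.cast_zero, zero_mul, mem_inter_iff, mem_Iic, mem_Ioi,
              mem_empty_iff_false, iff_false]
            rintro ⟨⟨_, h1⟩, h2⟩
            linarith
          rw [this, measure_empty]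
        rw [this]
        exact zero_le
      · have h1 := not_lt.1 (hjmin j (Nat.lt_succ_self j))
        have hsub : E ∩ Iic (((j + 1 : ℕ) : ℝ) * (δ / 2)) ⊆ (E ∩ Iic ((j : ℝ) * (δ / 2))) ∪
            Ioc ((j : ℝ) * (δ / 2)) (((j + 1 : ℕ) : ℝ) * (δ / 2)) := by
          intro y hy
          rcases le_or_gt y ((j : ℝ) * (δ / 2)) with h | h
          · exact Or.inl ⟨hy.1, h⟩
          · exact Or.inr ⟨h, hy.2⟩
        have h2 : μ₀ (Ioc ((j : ℝ) * (δ / 2)) (((j + 1 : ℕ) : ℝ) * (δ / 2))) ≤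
            ENNReal.ofReal (δ / 2) := by
          refine (Measure.restrict_apply_le _ _).trans ?_
          rw [Real.volume_Ioc]
          apply ENNReal.ofReal_le_ofReal
          push_cast
          linarith
        refine (measure_mono hsub).trans ((measure_union_le _ _).trans ((add_le_add h1 h2).trans ?_))
        rw [← ENNReal.ofReal_add (by linarith) (by linarith)]
        apply ENNReal.ofReal_le_ofReal
        linarith
    have hBmeas : MeasurableSet (E ∩ Iic ((j : ℝ) * (δ / 2))) := hEm.inter measurableSet_Iic
    refine ⟨_, n, hBmeas, Nat.cast_nonneg n, hle, ?_, ?_⟩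
    · intro x hx
      exact ⟨(((le_max_left M 0).trans (le_max_left _ _)).trans_lt hx.1.1).le, hx.1.2⟩
    · calc ENNReal.ofReal C ≤ ENNReal.ofReal (l * (δ / 2)) := by
            apply ENNReal.ofReal_le_ofReal
            have : 2 * C / δ ≤ l := le_max_right _ _
            rw [div_le_iff₀ hδ] at this
            linarith
        _ = ENNReal.ofReal l * ENNReal.ofReal (δ / 2) := ENNReal.ofReal_mul hl0
        _ ≤ ENNReal.ofReal l * μ₀ (E ∩ Iic ((j : ℝ) * (δ / 2))) := by gcongr
        _ = ∫⁻ x in (E ∩ Iic ((j : ℝ) * (δ / 2))), ENNReal.ofReal l ∂μ₀ := by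
            rw [lintegral_const, Measure.restrict_apply_univ]
        _ ≤ _ := by
            apply setLIntegral_mono' hBmeas
            intro x hx
            exact ENNReal.ofReal_le_ofReal hx.1.1.le

theorem oc_contra {phi h : ℝ → ℝ} (hpos : ∀ t, 0 < t → 0 < phi t)
    (hoc : ∀ u : ℕ → (ℝ → ℝ), (∀ n, marcMem phi (u n)) →
      (∀ n, ∀ᵐ x ∂μ₀, 0 ≤ u n x ∧ u n x ≤ |h x|) →
      (∀ n, ∀ᵐ x ∂μ₀, u (n + 1) x ≤ u n x) →
      (∀ᵐ x ∂μ₀, Tendsto (fun n => u n x) atTop (𝓝 0)) →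
      Tendsto (fun n => marcNorm phi (u n)) atTop (𝓝 0))
    (v : ℕ → ℝ → ℝ) (hvm : ∀ k, Measurable (v k)) (hv0 : ∀ k x, 0 ≤ v k x)
    (hvh : ∀ k x, v k x ≤ |h x|) (hvk : ∀ (k : ℕ) x, v k x ≠ 0 → (k : ℝ) ≤ |h x|)
    {C : ℝ} (hC : 0 ≤ C)
    (hup : ∀ t, 0 < t → marcK (fun x => ⨆ k, v k x) t ≤ ENNReal.ofReal (C * (t / phi t)))
    {c : ℝ} (hc : 0 < c)
    (hlow : ∀ k, ∃ t, 0 < t ∧ ENNReal.ofReal (c * (t / phi t)) ≤ marcK (v k) t) : False := by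
  set u : ℕ → ℝ → ℝ := fun n x => ⨆ k, v (n + k) x with hu
  have hbdd : ∀ n x, BddAbove (range fun k => v (n + k) x) := fun n x =>
    ⟨|h x|, by rintro _ ⟨k, rfl⟩; exact hvh _ _⟩
  have hum : ∀ n, Measurable (u n) := fun n =>
    Measurable.iSup fun k => hvm _
  have hu0 : ∀ n x, 0 ≤ u n x := fun n x => Real.iSup_nonneg fun k => hv0 _ _
  have huanti : ∀ n m x, m ≤ n → u n x ≤ u m x := by
    intro n m x hnm
    apply ciSup_le
    intro k
    have := le_ciSup (hbdd m x) (n - m + k)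
    rwa [← add_assoc, Nat.add_sub_cancel' hnm] at this
  have hu00 : u 0 = fun x => ⨆ k, v k x := by
    ext x
    simp [hu]
  have hKu : ∀ n t, 0 < t → marcK (u n) t ≤ ENNReal.ofReal (C * (t / phi t)) := by
    intro n t ht
    refine le_trans (marcK_mono (Eventually.of_forall fun x => ?_) t) (hup t ht)
    have e : (⨆ k, v k x) = u 0 x := by rw [hu00]
    rw [e, abs_of_nonneg (hu0 _ _), abs_of_nonneg (hu0 _ _)]
    exact huanti n 0 x (Nat.zero_le n)
  have hmem : ∀ n, marcMem phi (u n) := fun n =>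
    (marcMem_of_le hpos (hum n).aemeasurable hC (hKu n)).1
  have hN := hoc u hmem
    (fun n => Eventually.of_forall fun x => ⟨hu0 n x, ciSup_le fun k => hvh _ _⟩)
    (fun n => Eventually.of_forall fun x => huanti (n + 1) n x (Nat.le_succ n))
    (Eventually.of_forall fun x => by
      apply tendsto_const_nhds.congr'
      obtain ⟨N, hN⟩ := exists_nat_gt |h x|
      filter_upwards [eventually_ge_atTop N] with n hn
      have : ∀ k, v (n + k) x = 0 := by
        intro k
        by_contra hne
        have h1 := hvk _ _ hne
        have h2 : (N : ℝ) ≤ ((n + k : ℕ) : ℝ) := by exact_mod_cast hn.trans (Nat.le_add_right n k)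
        linarith
      simp [hu, this])
  obtain ⟨n, hn⟩ := (hN.eventually (gt_mem_nhds hc)).exists
  obtain ⟨t, ht, hlt⟩ := hlow n
  have hp := hpos t ht
  have h1 := le_marcNorm (hmem n) ht
  have h2 : ENNReal.ofReal (c * (t / phi t)) ≤ marcK (u n) t := by
    refine hlt.trans (marcK_mono (Eventually.of_forall fun x => ?_) t)
    rw [abs_of_nonneg (hu0 _ _), abs_of_nonneg (hv0 _ _)]
    exact le_ciSup (hbdd n x) 0
  have h3 : c * (t / phi t) ≤ (marcK (u n) t).toReal :=
    (ENNReal.ofReal_le_iff_le_toReal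
      (ne_top_of_le_ne_top ENNReal.ofReal_ne_top (hKu n t ht))).1 h2
  have h4 : c ≤ phi t / t * (marcK (u n) t).toReal := by
    calc c = phi t / t * (c * (t / phi t)) := by field_simp
      _ ≤ _ := by gcongr
  linarith

theorem min_le_psi {phi : ℝ → ℝ} (hpos : ∀ t, 0 < t → 0 < phi t)
    (hmono : MonotoneOn phi (Set.Ioi (0 : ℝ)))
    (hquasi : AntitoneOn (fun t => phi t / t) (Set.Ioi (0 : ℝ))) {r t : ℝ} (hr : 0 < r)
    (ht : 0 < t) : min t r ≤ phi r * (t / phi t) := by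
  have hpr := hpos r hr
  have hpt := hpos t ht
  rcases le_total t r with h | h
  · rw [min_eq_left h]
    have := hmono ht hr h
    calc t = phi t * (t / phi t) := by field_simp
      _ ≤ _ := by gcongr
  · rw [min_eq_right h]
    have := psi_mono hpos hquasi hr h
    calc r = phi r * (r / phi r) := by field_simp
      _ ≤ _ := by gcongr

theorem exists_hump {phi h : ℝ → ℝ} (hpos : ∀ t, 0 < t → 0 < phi t)
    (hmono : MonotoneOn phi (Set.Ioi (0 : ℝ)))
    (hquasi : AntitoneOn (fun t => phi t / t) (Set.Ioi (0 : ℝ)))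
    (hlim : Tendsto (fun t => t / phi t) (𝓝[>] (0 : ℝ)) (𝓝 0))
    (hz : ∀ e : ℝ, 0 < e → ∃ s, 0 < s ∧ phi s < e)
    (hm : Measurable h) (hK : marcK h 1 = ⊤) (M : ℝ) {e a : ℝ} (he : 0 < e) (ha : 0 < a) :
    ∃ (v : ℝ → ℝ) (b : ℝ), Measurable v ∧ (∀ x, 0 ≤ v x) ∧ (∀ x, v x ≤ |h x|) ∧
      (∀ x, v x ≠ 0 → M ≤ |h x|) ∧ 0 < b ∧ b < a ∧
      (∀ t, 0 < t → marcK v t ≤ ENNReal.ofReal (t / phi t)) ∧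
      (∀ t, a ≤ t → marcK v t ≤ ENNReal.ofReal (e * (t / phi t))) ∧
      (∀ t, 0 < t → t ≤ b → marcK v t ≤ ENNReal.ofReal (e * (t / phi t))) ∧
      ∃ t, 0 < t ∧ ENNReal.ofReal ((1 / 2) * (t / phi t)) ≤ marcK v t := by
  have hposE : ∀ᶠ a in 𝓝[>] (0 : ℝ), 0 < a := eventually_mem_nhdsWithin
  have hpa := hpos a ha
  obtain ⟨δ, hδ, hδe⟩ := (hposE.and (hlim.eventually (gt_mem_nhds
    (show (0 : ℝ) < e * (a / phi a) by positivity)))).exists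
  have hpδ := hpos δ hδ
  obtain ⟨A, L, hA, hL0, hAδ, hAh, hAint⟩ := hump_set hm hK hδ M (δ / phi δ)
  set w : ℝ → ℝ := A.indicator fun x => |h x| with hw
  have hwm : Measurable w := hm.abs.indicator hA
  have hw0 : ∀ x, 0 ≤ w x := fun x => indicator_nonneg (fun _ _ => abs_nonneg _) x
  have hwh : ∀ x, w x ≤ |h x| := fun x => indicator_le_self' (fun _ _ => abs_nonneg _) x
  have hwL : ∀ x, |w x| ≤ L := by
    intro x
    rw [abs_of_nonneg (hw0 x)]
    by_cases hx : x ∈ A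
    · simp only [hw, indicator_of_mem hx]
      exact (hAh x hx).2
    · simp only [hw, indicator_of_notMem hx]
      exact hL0
  have hwA : ∀ x, w x ≠ 0 → x ∈ A := fun x hx => by
    by_contra hc
    exact hx (indicator_of_notMem hc _)
  have hKw : ∀ t, marcK w t ≤ ENNReal.ofReal (L * min t δ) := by
    intro t
    refine (marcK_le_bdd hwL hL0 hwA t).trans ?_
    rw [ENNReal.ofReal_mul hL0, ENNReal.ofReal_min]
    gcongr
  obtain ⟨hwmem, -⟩ := marcMem_of_le (f := w) hpos hwm.aemeasurable
    (C := L * phi δ) (by positivity) (fun t ht => by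
      refine (hKw t).trans (ENNReal.ofReal_le_ofReal ?_)
      rw [mul_assoc]
      gcongr
      exact min_le_psi hpos hmono hquasi hδ ht)
  have hKfin : ∀ t, marcK w t ≠ ⊤ := fun t => ne_top_of_le_ne_top ENNReal.ofReal_ne_top (hKw t)
  set N := marcNorm phi w with hN
  have hN1 : 1 ≤ N := by
    have h1 := le_marcNorm hwmem hδ
    have h2 : ENNReal.ofReal (δ / phi δ) ≤ marcK w δ := by
      refine hAint.trans (le_trans (le_of_eq ?_) (lint_le_marcK hwm.aemeasurable hA hAδ))
      apply setLIntegral_congr_fun hA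
      intro x hx
      simp only [hw, indicator_of_mem hx, abs_abs]
    have h3 := (ENNReal.ofReal_le_iff_le_toReal (hKfin δ)).1 h2
    calc (1 : ℝ) = phi δ / δ * (δ / phi δ) := by field_simp
      _ ≤ phi δ / δ * (marcK w δ).toReal := by gcongr
      _ ≤ N := h1
  have hN0 : 0 < N := by linarith
  have hNi : N⁻¹ ≤ 1 := inv_le_one_of_one_le₀ hN1
  have hNi0 : 0 < N⁻¹ := inv_pos.2 hN0
  obtain ⟨s, hs, hsL⟩ := hz (e / (L + 1)) (by positivity)
  set v : ℝ → ℝ := fun x => N⁻¹ * w x with hv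
  have hKv : ∀ t, marcK v t = ENNReal.ofReal N⁻¹ * marcK w t := fun t => marcK_smul w hNi0 t
  have hv1 : ∀ t, 0 < t → marcK v t ≤ ENNReal.ofReal (t / phi t) := by
    intro t ht
    rw [hKv]
    refine (mul_le_mul_right (marcK_le_of_mem hpos hwmem ht (hKfin t)) _).trans ?_
    rw [← ENNReal.ofReal_mul hNi0.le, ← mul_assoc, inv_mul_cancel₀ hN0.ne', one_mul]
  refine ⟨v, min s (a / 2), hwm.const_mul _, fun x => mul_nonneg hNi0.le (hw0 x), ?_, ?_,
    lt_min hs (by linarith), (min_le_right _ _).trans_lt (by linarith), hv1, ?_, ?_, ?_⟩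
  · intro x
    refine le_trans ?_ (hwh x)
    have := hw0 x
    simp only [hv]
    nlinarith
  · intro x hx
    exact (hAh x (hwA x (right_ne_zero_of_mul hx))).1
  · intro t hat
    have h1 : marcK v t ≤ marcK v δ := by
      apply setLIntegral_mono' measurableSet_Ioi
      intro l hl
      apply le_min
      · refine (min_le_right _ _).trans (le_trans (measure_mono ?_) hAδ)
        intro x hx
        apply hwA
        intro h0
        simp only [mem_setOf_eq, hv, h0, mul_zero, abs_zero] at hx
        exact absurd hl (not_lt.2 hx.le)
      · exact min_le_right _ _
    refine h1.trans ((hv1 δ hδ).trans (ENNReal.ofReal_le_ofReal (hδe.le.trans ?_)))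
    have := psi_mono hpos hquasi ha hat
    gcongr
  · intro t ht htb
    have hpt := hpos t ht
    have h1 : marcK v t ≤ marcK w t := by
      rw [hKv]
      calc ENNReal.ofReal N⁻¹ * marcK w t ≤ 1 * marcK w t := by
            gcongr
            exact ENNReal.ofReal_le_one.2 hNi
        _ = _ := one_mul _
    refine h1.trans ((hKw t).trans (ENNReal.ofReal_le_ofReal ?_))
    have h2 : phi t ≤ phi s := hmono ht hs (htb.trans (min_le_left _ _))
    have h3 : L * phi t ≤ e := by
      rw [lt_div_iff₀ (by linarith)] at hsL
      nlinarith
    calc L * min t δ ≤ L * t := by gcongr; exact min_le_left _ _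
      _ = (L * phi t) * (t / phi t) := by field_simp
      _ ≤ _ := by gcongr
  · have hlt : N / 2 < ⨆ t : {t : ℝ // 0 < t}, marcFun phi w t.1 := by
      change N / 2 < N
      linarith
    haveI : Nonempty {t : ℝ // 0 < t} := ⟨⟨1, one_pos⟩⟩
    obtain ⟨⟨t, ht⟩, htt⟩ := exists_lt_of_lt_ciSup hlt
    refine ⟨t, ht, ?_⟩
    have hpt := hpos t ht
    rw [marcFun_eq phi hwm.aemeasurable ht] at htt
    rw [hKv, ← ENNReal.ofReal_toReal (hKfin t), ← ENNReal.ofReal_mul hNi0.le]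
    apply ENNReal.ofReal_le_ofReal
    calc 1 / 2 * (t / phi t) = N⁻¹ * (N / 2 * (t / phi t)) := by field_simp
      _ ≤ N⁻¹ * ((phi t / t * (marcK w t).toReal) * (t / phi t)) := by gcongr
      _ = _ := by field_simp

theorem oc_fin_meas {phi h : ℝ → ℝ} (hpos : ∀ t, 0 < t → 0 < phi t)
    (hmono : MonotoneOn phi (Set.Ioi (0 : ℝ)))
    (hquasi : AntitoneOn (fun t => phi t / t) (Set.Ioi (0 : ℝ)))
    (hlim : Tendsto (fun t => t / phi t) (𝓝[>] (0 : ℝ)) (𝓝 0))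
    (hm : Measurable h)
    (hoc : ∀ u : ℕ → (ℝ → ℝ), (∀ n, marcMem phi (u n)) →
      (∀ n, ∀ᵐ x ∂μ₀, 0 ≤ u n x ∧ u n x ≤ |h x|) →
      (∀ n, ∀ᵐ x ∂μ₀, u (n + 1) x ≤ u n x) →
      (∀ᵐ x ∂μ₀, Tendsto (fun n => u n x) atTop (𝓝 0)) →
      Tendsto (fun n => marcNorm phi (u n)) atTop (𝓝 0)) :
    marcK h 1 ≠ ⊤ := by
  intro hK
  by_cases hz : ∀ e : ℝ, 0 < e → ∃ s, 0 < s ∧ phi s < e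
  · have hump := fun (k : ℕ) (a : {a : ℝ // 0 < a}) => exists_hump (e := (1 / 2 : ℝ) ^ k)
      hpos hmono hquasi hlim hz hm hK k (by positivity) a.2
    choose V B hVm hV0 hVh hVk hB0 hBa hV1 hV2 hV3 hV4 using hump
    let a : ℕ → {a : ℝ // 0 < a} := fun k =>
      Nat.rec ⟨1, one_pos⟩ (fun n p => ⟨B n p, hB0 n p⟩) k
    have hastep : ∀ k, (a (k + 1)).1 = B k (a k) := fun k => rfl
    have haanti : StrictAnti fun k => (a k).1 := strictAnti_nat_of_succ_lt fun k => by
      rw [hastep]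
      exact hBa k (a k)
    refine oc_contra hpos hoc (fun k => V k (a k)) (fun k => hVm _ _) (fun k => hV0 _ _)
      (fun k => hVh _ _) (fun k => hVk _ _) (C := 3) (by norm_num) ?_ (c := 1 / 2) (by norm_num)
      (fun k => hV4 _ _)
    intro t ht
    have hpt := hpos t ht
    have hsup := marcK_sup (fun k => V k (a k)) (fun x => ⨆ k, V k (a k) x) t (by
      intro x l hl _
      rw [abs_of_nonneg (Real.iSup_nonneg fun k => hV0 _ _ _)] at hl
      obtain ⟨k, hk⟩ := exists_lt_of_lt_ciSup hl
      exact ⟨k, hk.trans_le (le_abs_self _)⟩)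
    refine hsup.trans ?_
    obtain ⟨j, hj⟩ : ∃ j : ℕ, ∀ k, (a (k + 1)).1 < t → t < (a k).1 → k = j := by
      by_cases hex : ∃ j, (a (j + 1)).1 < t ∧ t < (a j).1
      · obtain ⟨j, hj1, hj2⟩ := hex
        refine ⟨j, fun k hk1 hk2 => ?_⟩
        have h1 : j < k + 1 := haanti.lt_iff_gt.1 (hk1.trans hj2)
        have h2 : k < j + 1 := haanti.lt_iff_gt.1 (hj1.trans hk2)
        omega
      · push Not at hex
        exact ⟨0, fun k h1 h2 => absurd h2 (not_lt.2 (hex k h1))⟩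
    have hbound : ∀ k, marcK (V k (a k)) t ≤ ENNReal.ofReal ((t / phi t) * (1 / 2) ^ k) +
        (if k = j then ENNReal.ofReal (t / phi t) else 0) := by
      intro k
      by_cases h1 : t ≤ (a (k + 1)).1
      · rw [mul_comm]
        exact (hV3 k (a k) t ht h1).trans le_self_add
      · by_cases h2 : (a k).1 ≤ t
        · rw [mul_comm]
          exact (hV2 k (a k) t h2).trans le_self_add
        · rw [if_pos (hj k (not_le.1 h1) (not_le.1 h2))]
          exact (hV1 k (a k) t ht).trans le_add_self
    refine (ENNReal.tsum_le_tsum hbound).trans ?_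
    rw [ENNReal.tsum_add, tsum_ite_eq, ← ENNReal.ofReal_tsum_of_nonneg
      (fun k => by positivity) (summable_geometric_two.mul_left _), tsum_mul_left,
      tsum_geometric_two, ← ENNReal.ofReal_add (by positivity) (by positivity)]
    apply ENNReal.ofReal_le_ofReal
    linarith
  · push Not at hz
    obtain ⟨e, he, hz⟩ := hz
    have hsets := fun k : ℕ => hump_set hm hK (δ := (1 / 2 : ℝ) ^ k) (by positivity)
      ((k : ℝ) + 1) 1
    choose A L hA _ hAδ hAh hAint using hsets
    have hval : ∀ k x, (A k).indicator (fun _ => (1 : ℝ)) x = 0 ∨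
        (x ∈ A k ∧ (A k).indicator (fun _ => (1 : ℝ)) x = 1) := by
      intro k x
      by_cases hx : x ∈ A k
      · right
        exact ⟨hx, indicator_of_mem hx _⟩
      · left
        exact indicator_of_notMem hx _
    have h01 : ∀ k x, (A k).indicator (fun _ => (1 : ℝ)) x ≤ 1 := fun k x => by
      rcases hval k x with h | ⟨_, h⟩ <;> rw [h]
      exact zero_le_one
    have h00 : ∀ k x, 0 ≤ (A k).indicator (fun _ => (1 : ℝ)) x := fun k x => by
      rcases hval k x with h | ⟨_, h⟩ <;> rw [h]
      exact zero_le_one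
    refine oc_contra hpos hoc (fun k => (A k).indicator fun _ => (1 : ℝ))
      (fun k => measurable_const.indicator (hA k)) h00 ?_ ?_
      (C := phi 2) (hpos 2 two_pos).le ?_ (c := e) he ?_
    · intro k x
      rcases hval k x with h | ⟨hx, h⟩ <;> rw [h]
      · exact abs_nonneg _
      · have := (hAh k x hx).1
        have : (0 : ℝ) ≤ k := Nat.cast_nonneg k
        linarith
    · intro k x hx
      rcases hval k x with h | ⟨hx', h⟩
      · exact absurd h hx
      · have := (hAh k x hx').1
        linarith
    · intro t ht
      refine (marcK_le_bdd (L := 1) (A := ⋃ k, A k) ?_ zero_le_one ?_ t).trans ?_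
      · intro x
        rw [abs_of_nonneg (Real.iSup_nonneg fun k => h00 _ _)]
        exact ciSup_le fun k => h01 k x
      · intro x hx
        by_contra hc
        apply hx
        simp only [mem_iUnion, not_exists] at hc
        simp [hc]
      · have hU : μ₀ (⋃ k, A k) ≤ ENNReal.ofReal 2 := by
          refine (measure_iUnion_le _).trans ((ENNReal.tsum_le_tsum hAδ).trans ?_)
          rw [← ENNReal.ofReal_tsum_of_nonneg (fun k => by positivity) summable_geometric_two,
            tsum_geometric_two]
        rw [ENNReal.ofReal_one, one_mul]
        refine (min_le_min le_rfl hU).trans ?_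
        rw [← ENNReal.ofReal_min]
        exact ENNReal.ofReal_le_ofReal (min_le_psi hpos hmono hquasi two_pos ht)
    · intro k
      have hfin : μ₀ (A k) ≠ ⊤ := ne_top_of_le_ne_top ENNReal.ofReal_ne_top (hAδ k)
      have hne : μ₀ (A k) ≠ 0 := by
        intro h0
        have := hAint k
        rw [setLIntegral_measure_zero _ _ h0] at this
        simp at this
      have ht : 0 < (μ₀ (A k)).toReal := ENNReal.toReal_pos hne hfin
      refine ⟨_, ht, ?_⟩
      have hp := hpos _ ht
      have h1 := lint_le_marcK (f := (A k).indicator fun _ => (1 : ℝ))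
        (measurable_const.indicator (hA k)).aemeasurable (hA k)
        (ENNReal.ofReal_toReal hfin).symm.le
      refine le_trans ?_ h1
      have h2 : ∫⁻ x in A k, ENNReal.ofReal |(A k).indicator (fun _ => (1 : ℝ)) x| ∂μ₀ =
          μ₀ (A k) := by
        rw [setLIntegral_congr_fun (g := fun _ => 1) (hA k)]
        · simp
        · intro x hx
          simp [hx]
      rw [h2]
      conv_rhs => rw [← ENNReal.ofReal_toReal hfin]
      apply ENNReal.ofReal_le_ofReal
      have := hz _ ht
      rw [← mul_div_assoc, div_le_iff₀ hp]
      nlinarith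

theorem marcK_smul_nonneg (f : ℝ → ℝ) {c : ℝ} (hc : 0 ≤ c) (t : ℝ) :
    marcK (fun x => c * f x) t = ENNReal.ofReal c * marcK f t := by
  rcases hc.eq_or_lt with rfl | hc
  · rw [ENNReal.ofReal_zero, zero_mul]
    unfold marcK
    rw [setLIntegral_congr_fun (g := fun _ => 0) measurableSet_Ioi]
    · simp
    · intro l hl
      have : {x : ℝ | l < |(0 : ℝ) * f x|} = ∅ := by
        ext x
        simp only [zero_mul, abs_zero, mem_setOf_eq, mem_empty_iff_false, iff_false, not_lt]
        exact le_of_lt hl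
      show min (ENNReal.ofReal t) (μ₀ {x : ℝ | l < |(0 : ℝ) * f x|}) = 0
      rw [this, measure_empty]
      exact min_eq_right zero_le
  · exact marcK_smul f hc t

theorem oc_fin {phi h : ℝ → ℝ} (hpos : ∀ t, 0 < t → 0 < phi t)
    (hmono : MonotoneOn phi (Set.Ioi (0 : ℝ)))
    (hquasi : AntitoneOn (fun t => phi t / t) (Set.Ioi (0 : ℝ)))
    (hlim : Tendsto (fun t => t / phi t) (𝓝[>] (0 : ℝ)) (𝓝 0))
    (hh : h ∈ ocSet μ₀ (marcMem phi) (marcNorm phi)) {t : ℝ} (ht : 0 < t) : marcK h t ≠ ⊤ := by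
  obtain ⟨hmem, hoc⟩ := hh
  have hae : ∀ᵐ x ∂μ₀, h x = hmem.1.mk h x := hmem.1.ae_eq_mk
  have h1 : marcK (hmem.1.mk h) 1 ≠ ⊤ := by
    refine oc_fin_meas hpos hmono hquasi hlim hmem.1.measurable_mk ?_
    intro u hu hb
    refine hoc u hu fun n => ?_
    filter_upwards [hb n, hae] with x hx hx2
    rw [hx2]
    exact hx
  refine marcK_ne_top one_pos ht (ne_top_of_le_ne_top h1 (marcK_mono ?_ 1))
  filter_upwards [hae] with x hx
  rw [hx]

theorem marcNorm_null {phi u : ℝ → ℝ} (hpos : ∀ t, 0 < t → 0 < phi t)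
    (hu : AEMeasurable u μ₀) (h : ∀ᵐ x ∂μ₀, u x = 0) : marcMem phi u ∧ marcNorm phi u = 0 := by
  have h1 := marcMem_of_le hpos hu le_rfl (C := 0) (fun t ht => by
    have h2 : marcK u t ≤ marcK (fun x => (0 : ℝ) * u x) t := marcK_mono (by
      filter_upwards [h] with x hx
      simp [hx]) t
    rw [marcK_smul_nonneg u le_rfl] at h2
    simpa using h2)
  exact ⟨h1.1, le_antisymm h1.2 (marcNorm_nonneg hpos)⟩

theorem ring_meas {a b : ℝ} (ha : 0 < a) : μ₀ (Ioc a b) = ENNReal.ofReal (b - a) := by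
  rw [Measure.restrict_apply' measurableSet_Ioi, inter_eq_left.2, Real.volume_Ioc]
  intro x hx
  exact ha.trans hx.1

theorem ring_bound {phi f : ℝ → ℝ} (hpos : ∀ t, 0 < t → 0 < phi t) (k : ℕ) {a b y K : ℝ}
    (ha : 0 < a) (hb : 0 < b) (hab : a ≤ b * (1 / ((k : ℝ) + 2))) (hy : 0 ≤ y)
    (hf : ∀ s ∈ Ioc a b, y * ((1 - 1 / ((k : ℝ) + 2)) / phi b) ≤ |f s|)
    (hK0 : 0 ≤ K)
    (hK : ∫⁻ x in Ioc a b, ENNReal.ofReal |f x| ∂μ₀ ≤ ENNReal.ofReal K) :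
    y * ((1 - 1 / ((k : ℝ) + 2)) * (1 - 1 / ((k : ℝ) + 2))) ≤ phi b / b * K := by
  have hp := hpos b hb
  have hk : (0 : ℝ) ≤ k := Nat.cast_nonneg k
  have h1 : (0 : ℝ) ≤ 1 - 1 / ((k : ℝ) + 2) := by
    rw [sub_nonneg, div_le_one (by linarith)]
    linarith
  set q := 1 - 1 / ((k : ℝ) + 2) with hq
  have hq2 : b * q ≤ b - a := by
    rw [hq]
    linarith
  have h2 : ENNReal.ofReal (y * (q / phi b)) * ENNReal.ofReal (b - a) ≤ ENNReal.ofReal K := by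
    refine le_trans ?_ hK
    rw [← ring_meas ha, ← Measure.restrict_apply_univ (μ := μ₀), ← lintegral_const]
    apply setLIntegral_mono' measurableSet_Ioc
    intro x hx
    exact ENNReal.ofReal_le_ofReal (hf x hx)
  rw [← ENNReal.ofReal_mul (by positivity), ENNReal.ofReal_le_ofReal_iff hK0] at h2
  have h3 : y * (q / phi b) * (b * q) ≤ K := le_trans (by gcongr) h2
  calc y * (q * q) = phi b / b * (y * (q / phi b) * (b * q)) := by field_simp
    _ ≤ _ := by gcongr

theorem q_tendsto : Tendsto (fun k : ℕ => (1 - 1 / ((k : ℝ) + 2)) * (1 - 1 / ((k : ℝ) + 2))) atTop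
    (𝓝 1) := by
  have h : Tendsto (fun k : ℕ => 1 / ((k : ℝ) + 2)) atTop (𝓝 0) := by
    have h1 := (tendsto_one_div_add_atTop_nhds_zero_nat (𝕜 := ℝ)).comp (tendsto_add_atTop_nat 1)
    refine h1.congr fun k => ?_
    simp only [Function.comp]
    push_cast
    ring_nf
  have h2 := (tendsto_const_nhds (x := (1 : ℝ))).sub h
  simpa using h2.mul h2

theorem linf_isom {phi : ℝ → ℝ} (hpos : ∀ t, 0 < t → 0 < phi t)
    {t : ℕ → ℝ} {idx : ℝ → ℕ} {g : ℝ → ℝ} (ht : ∀ k, 0 < t k)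
    (htt : ∀ k : ℕ, t (k + 1) ≤ t k * (1 / ((k : ℝ) + 2))) (hg0 : ∀ s, 0 ≤ g s)
    (hgk : ∀ k : ℕ, ∀ s ∈ Ioc (t (k + 1)) (t k), idx s = k ∧ g s = (1 - 1 / ((k : ℝ) + 2)) / phi (t k))
    (him : AEMeasurable idx μ₀) (hgm : AEMeasurable g μ₀)
    (hgK : ∀ s, 0 < s → marcK g s ≤ ENNReal.ofReal (s / phi s))
    (x : ℕ → ℝ) (hx : BddAbove (Set.range fun n => |x n|)) :
    marcMem phi (fun s => x (Nat.unpair (idx s)).1 * g s) ∧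
      marcNorm phi (fun s => x (Nat.unpair (idx s)).1 * g s) = ⨆ n, |x n| := by
  set C := ⨆ n, |x n| with hC
  have hC0 : 0 ≤ C := Real.iSup_nonneg fun n => abs_nonneg _
  have hm : AEMeasurable (fun s => x (Nat.unpair (idx s)).1 * g s) μ₀ := by
    refine AEMeasurable.mul ?_ hgm
    exact (measurable_from_nat (f := fun k => x (Nat.unpair k).1)).comp_aemeasurable him
  have hKle : ∀ s, 0 < s → marcK (fun s => x (Nat.unpair (idx s)).1 * g s) s ≤
      ENNReal.ofReal (C * (s / phi s)) := by
    intro s hs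
    have h1 : marcK (fun s => x (Nat.unpair (idx s)).1 * g s) s ≤ marcK (fun s => C * g s) s := by
      refine marcK_mono (Eventually.of_forall fun y => ?_) s
      rw [abs_mul, abs_mul, abs_of_nonneg hC0]
      gcongr
      exact le_ciSup hx _
    refine h1.trans ?_
    rw [marcK_smul_nonneg g hC0, ENNReal.ofReal_mul hC0]
    gcongr
    exact hgK s hs
  obtain ⟨hmem, hle⟩ := marcMem_of_le hpos hm hC0 hKle
  refine ⟨hmem, le_antisymm hle ?_⟩
  apply ciSup_le
  intro n
  have hsub : Tendsto (fun j : ℕ => Nat.pair n j) atTop atTop :=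
    tendsto_atTop_mono (fun j => Nat.right_le_pair n j) tendsto_id
  have hlim := (q_tendsto.comp hsub).const_mul |x n|
  rw [mul_one] at hlim
  refine le_of_tendsto' hlim fun j => ?_
  set k := Nat.pair n j with hk
  have hp := hpos _ (ht k)
  refine le_trans ?_ (le_marcNorm hmem (ht k))
  have hfin : marcK (fun s => x (Nat.unpair (idx s)).1 * g s) (t k) ≠ ⊤ :=
    ne_top_of_le_ne_top ENNReal.ofReal_ne_top (hKle _ (ht k))
  refine ring_bound hpos k (ht (k + 1)) (ht k) (htt k) (abs_nonneg _)
    (f := fun s => x (Nat.unpair (idx s)).1 * g s) ?_ ENNReal.toReal_nonneg ?_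
  · intro s hs
    obtain ⟨h1, h2⟩ := hgk k s hs
    simp only [h1, abs_mul, abs_of_nonneg (hg0 s)]
    rw [h2, hk, Nat.unpair_pair]
  · rw [ENNReal.ofReal_toReal hfin]
    refine lint_le_marcK hm measurableSet_Ioc ?_
    rw [ring_meas (ht (k + 1))]
    apply ENNReal.ofReal_le_ofReal
    have := ht (k + 1)
    linarith

theorem dist_lower {phi : ℝ → ℝ} (hpos : ∀ t, 0 < t → 0 < phi t)
    (hmono : MonotoneOn phi (Set.Ioi (0 : ℝ)))
    (hquasi : AntitoneOn (fun t => phi t / t) (Set.Ioi (0 : ℝ)))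
    (hlim : Tendsto (fun t => t / phi t) (𝓝[>] (0 : ℝ)) (𝓝 0))
    {t : ℕ → ℝ} {g h : ℝ → ℝ} (ht : ∀ k, 0 < t k)
    (htt : ∀ k : ℕ, t (k + 1) ≤ t k * (1 / ((k : ℝ) + 2))) (hg0 : ∀ s, 0 ≤ g s)
    (hgk : ∀ k : ℕ, ∀ s ∈ Ioc (t (k + 1)) (t k), g s = (1 - 1 / ((k : ℝ) + 2)) / phi (t k))
    (hgm : AEMeasurable g μ₀)
    (hgK : ∀ s, 0 < s → marcK g s ≤ ENNReal.ofReal (s / phi s))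
    (hh : h ∈ ocSet μ₀ (marcMem phi) (marcNorm phi)) : 1 ≤ marcNorm phi (g - h) := by
  have hfin : ∀ {s : ℝ}, 0 < s → marcK h s ≠ ⊤ := fun hs => oc_fin hpos hmono hquasi hlim hh hs
  obtain ⟨hmem, hoc⟩ := hh
  set N := marcNorm phi h with hN
  have hN0 : 0 ≤ N := marcNorm_nonneg hpos
  have hKh : ∀ s, 0 < s → marcK h s ≤ ENNReal.ofReal (N * (s / phi s)) := fun s hs =>
    marcK_le_of_mem hpos hmem hs (hfin hs)
  have hdm : AEMeasurable (g - h) μ₀ := hgm.sub hmem.1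
  have hKd : ∀ s, 0 < s → marcK (g - h) s ≤ ENNReal.ofReal ((2 * (1 + N)) * (s / phi s)) := by
    intro s hs
    have hp := hpos s hs
    have h1 := marcK_add g (fun x => - h x) s
    have h2 : marcK (fun x => - h x) s ≤ marcK h s :=
      marcK_mono (Eventually.of_forall fun x => by simp) s
    have h3 : (g - h) = fun x => g x + - h x := by
      ext x
      simp [sub_eq_add_neg]
    rw [h3]
    refine h1.trans ?_
    calc 2 * (marcK g s + marcK (fun x => - h x) s)
        ≤ 2 * (ENNReal.ofReal (s / phi s) + ENNReal.ofReal (N * (s / phi s))) := by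
          gcongr
          · exact hgK s hs
          · exact h2.trans (hKh s hs)
      _ = ENNReal.ofReal (2 * (s / phi s + N * (s / phi s))) := by
          have e1 : 0 ≤ s / phi s := by positivity
          rw [ENNReal.ofReal_mul (p := 2) (by norm_num), ENNReal.ofReal_add e1 (mul_nonneg hN0 e1)]
          simp
      _ = _ := by
          congr 1
          ring
  have hdmem := (marcMem_of_le hpos hdm (by positivity) hKd).1
  set u : ℕ → ℝ → ℝ := fun k => (Iic (t k)).indicator fun x => |h x| with hu
  have hu0 : ∀ k x, 0 ≤ u k x := fun k x => indicator_nonneg (fun _ _ => abs_nonneg _) x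
  have huh : ∀ k x, u k x ≤ |h x| := fun k x => indicator_le_self' (fun _ _ => abs_nonneg _) x
  have hum : ∀ k, AEMeasurable (u k) μ₀ := fun k =>
    (measurable_norm.comp_aemeasurable hmem.1).indicator measurableSet_Iic
  have hKu : ∀ k s, 0 < s → marcK (u k) s ≤ ENNReal.ofReal (N * (s / phi s)) := fun k s hs =>
    (marcK_mono (Eventually.of_forall fun x => by
      rw [abs_of_nonneg (hu0 k x)]
      exact huh k x) s).trans (hKh s hs)
  have humem : ∀ k, marcMem phi (u k) := fun k =>
    (marcMem_of_le hpos (hum k) hN0 (hKu k)).1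
  have hk2 : ∀ k : ℕ, (1 : ℝ) / ((k : ℝ) + 2) ≤ 1 / 2 := fun k => by
    have : (0 : ℝ) ≤ k := Nat.cast_nonneg k
    exact one_div_le_one_div_of_le (by norm_num) (by linarith)
  have hthalf : ∀ k, t (k + 1) ≤ t k * (1 / 2) := fun k =>
    (htt k).trans (mul_le_mul_of_nonneg_left (hk2 k) (ht k).le)
  have htpow : ∀ k, t k ≤ t 0 * (1 / 2) ^ k := by
    intro k
    induction k with
    | zero => simp
    | succ k ih =>
      have := hthalf k
      rw [pow_succ]
      nlinarith
  have htlim : Tendsto t atTop (𝓝 0) := by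
    refine squeeze_zero (fun k => (ht k).le) htpow ?_
    have := (tendsto_pow_atTop_nhds_zero_of_lt_one (r := (1 / 2 : ℝ)) (by norm_num)
      (by norm_num)).const_mul (t 0)
    simpa using this
  have hNu := hoc u humem (fun k => Eventually.of_forall fun x => ⟨hu0 k x, huh k x⟩)
    (fun k => Eventually.of_forall fun x => by
      refine indicator_le_indicator_of_subset (Iic_subset_Iic.2 ?_) (fun _ => abs_nonneg _) x
      have := hthalf k
      have := ht k
      linarith)
    (by
      filter_upwards [ae_restrict_mem measurableSet_Ioi] with x hx
      apply tendsto_const_nhds.congr'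
      filter_upwards [htlim.eventually (gt_mem_nhds hx)] with k hk
      exact (indicator_of_notMem (fun hc => absurd (mem_Iic.1 hc) (not_le.2 hk)) _).symm)
  have hlim2 := hNu.const_add (marcNorm phi (g - h))
  rw [add_zero] at hlim2
  refine le_of_tendsto_of_tendsto' q_tendsto hlim2 fun k => ?_
  have hp := hpos _ (ht k)
  have hf1 : marcK (g - h) (t k) ≠ ⊤ :=
    ne_top_of_le_ne_top ENNReal.ofReal_ne_top (hKd _ (ht k))
  have hf2 : marcK (u k) (t k) ≠ ⊤ :=
    ne_top_of_le_ne_top ENNReal.ofReal_ne_top (hKu k _ (ht k))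
  have hEt : μ₀ (Ioc (t (k + 1)) (t k)) ≤ ENNReal.ofReal (t k) := by
    rw [ring_meas (ht (k + 1))]
    apply ENNReal.ofReal_le_ofReal
    have := ht (k + 1)
    linarith
  have hb := ring_bound hpos k (ht (k + 1)) (ht k) (htt k) zero_le_one (f := g)
    (K := (marcK (g - h) (t k)).toReal + (marcK (u k) (t k)).toReal)
    (fun s hs => by rw [one_mul, ← hgk k s hs]; exact le_abs_self _) (by positivity) (by
      rw [ENNReal.ofReal_add ENNReal.toReal_nonneg ENNReal.toReal_nonneg,
        ENNReal.ofReal_toReal hf1, ENNReal.ofReal_toReal hf2]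
      refine le_trans ?_ (add_le_add (lint_le_marcK hdm measurableSet_Ioc hEt)
        (lint_le_marcK (hum k) measurableSet_Ioc hEt))
      rw [← lintegral_add_left' (by
        exact (ENNReal.measurable_ofReal.comp_aemeasurable
          (measurable_norm.comp_aemeasurable hdm)).restrict)]
      apply setLIntegral_mono' measurableSet_Ioc
      intro x hx
      rw [← ENNReal.ofReal_add (abs_nonneg _) (abs_nonneg _)]
      apply ENNReal.ofReal_le_ofReal
      have h1 : u k x = |h x| := indicator_of_mem (mem_Iic.2 hx.2) _
      rw [h1, abs_abs, Pi.sub_apply]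
      have := abs_add_le (g x - h x) (h x)
      simpa using this)
  rw [one_mul, mul_add] at hb
  exact hb.trans (add_le_add (le_marcNorm hdmem (ht k)) (le_marcNorm (humem k) (ht k)))

/-- Let `φ` be a quasi-concave function on `(0,∞)` with `lim_{t→0⁺} t/φ(t) = 0`. Then the
Marcinkiewicz space `M_φ` contains a function `g` with `‖g‖_{M_φ} = 1` and
`dist (g, (M_φ)_a) = 1`; consequently `M_φ` contains a lattice isometric copy of `ℓ∞`. -/
theorem marcinkiewicz_contains_linf (phi : ℝ → ℝ)
    (h0 : phi 0 = 0) (hpos : ∀ t, 0 < t → 0 < phi t)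
    (hmono : MonotoneOn phi (Set.Ioi (0 : ℝ)))
    (hquasi : AntitoneOn (fun t => phi t / t) (Set.Ioi (0 : ℝ)))
    (hlim : Tendsto (fun t => t / phi t) (𝓝[>] (0 : ℝ)) (𝓝 0)) :
    (∃ g : ℝ → ℝ, marcMem phi g ∧ marcNorm phi g = 1 ∧
      distIn (marcNorm phi) g
        (ocSet (volume.restrict (Set.Ioi (0 : ℝ))) (marcMem phi) (marcNorm phi)) = 1) ∧
    HasLatticeCopyLinf (marcMem phi) (marcNorm phi) := by
  obtain ⟨t, idx, g, ht, htt, hg0, hgk, him, hgm, hgK⟩ := exists_profile phi hpos hmono hquasi hlim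
  have hiso := linf_isom hpos ht htt hg0 hgk him hgm hgK
  refine ⟨⟨g, ?_⟩, fun x s => x (Nat.unpair (idx s)).1 * g s, ?_, ?_, ?_, hiso⟩
  · obtain ⟨h1, h2⟩ := hiso (fun _ => 1) ⟨1, by rintro _ ⟨n, rfl⟩; simp⟩
    simp only [one_mul, abs_one, ciSup_const] at h1 h2
    refine ⟨h1, h2, ?_⟩
    have hlow : ∀ b ∈ (fun h => marcNorm phi (g - h)) '' ocSet (volume.restrict (Set.Ioi (0 : ℝ)))
        (marcMem phi) (marcNorm phi), 1 ≤ b := by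
      rintro _ ⟨h, hh, rfl⟩
      exact dist_lower hpos hmono hquasi hlim ht htt hg0 (fun k s hs => (hgk k s hs).2) hgm hgK hh
    have hmem : (1 : ℝ) ∈ (fun h => marcNorm phi (g - h)) ''
        ocSet (volume.restrict (Set.Ioi (0 : ℝ))) (marcMem phi) (marcNorm phi) := by
      refine ⟨0, ⟨(marcNorm_null hpos aemeasurable_const (Eventually.of_forall fun _ => rfl)).1,
        ?_⟩, by simp [h2]⟩
      intro u hu hb _ _
      apply tendsto_const_nhds.congr
      intro n
      refine (marcNorm_null hpos (hu n).1 ?_).2.symm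
      filter_upwards [hb n] with x hx
      simp only [Pi.zero_apply, abs_zero] at hx
      exact le_antisymm hx.2 hx.1
    exact le_antisymm (csInf_le ⟨1, hlow⟩ hmem) (le_csInf ⟨1, hmem⟩ hlow)
  · intro x y
    ext s
    simp [add_mul]
  · intro c x
    ext s
    simp [mul_assoc]
  · intro x
    ext s
    simp [abs_mul, abs_of_nonneg (hg0 s)]
end
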